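/- arXiv:1904.04182 — 9 statements merged into one kernel-verified Lean document; each statement's English description precedes it below -/
import Mathlib

section
/- Let R₁, R₂, S₁, S₂, T₁, T₂, Φ be finite types. Suppose given: a probability distribution p_pre on R₁ × R₂; for each (r₁, r₂) ∈ R₁ × R₂ a probability distribution p_mid(r₁,r₂) on S₁ × S₂ whose marginal on S₁ does not depend on r₂, i.e. Σ_{s₂} p_mid(r₁,r₂)(s₁,s₂) = q(r₁)(s₁) for some function q; a probability distribution μ on Φ; and nonnegative functions c₁ : T₁ × R₁ × S₁ × Φ → ℝ and c₂ : T₂ × R₂ × S₂ × Φ → ℝ with Σ_{t₁} c₁(t₁,r₁,s₁,φ) = 1 and Σ_{t₂} c₂(t₂,r₂,s₂,φ) = 1 for all arguments. Define the wired distribution p(t₁,t₂) = Σ_{r₁,r₂,s₁,s₂,φ} μ(φ) c₁(t₁,r₁,s₁,φ) c₂(t₂,r₂,s₂,φ) p_mid(r₁,r₂)(s₁,s₂) p_pre(r₁,r₂). Then for every t₁, Σ_{t₂} p(t₁,t₂) = Σ_{r₁,s₁,φ} μ(φ) c₁(t₁,r₁,s₁,φ) q(r₁)(s₁) p₁(r₁),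 where p₁(r₁) = Σ_{r₂} p_pre(r₁,r₂); in particular the marginal of the wired distribution on t₁ depends only on the first-wire data (p₁, q, c₁, μ). -/
/-!
Summing over `t₂` first replaces the response `c₂` by its total mass `1`, for every value of its
other arguments. After that `s₂` occurs only in `pmid`, so the non-disturbance hypothesis turns the
sum over `s₂` into `q r₁ s₁`, which is independent of `r₂`; hence the sum over `r₂` acts on `ppre`
alone and gives its first marginal. Everything else is exchanging finite sums.
-/

open Finset

/-- Non-disturbance preservation under non-contextual wirings (two-button instance):
the marginal on the first output of the wired distribution depends only on the
first-wire data. -/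
theorem wiring_preserves_nondisturbance
    {R₁ R₂ S₁ S₂ T₁ T₂ Φ : Type} [Fintype R₁] [Fintype R₂] [Fintype S₁] [Fintype S₂]
    [Fintype T₁] [Fintype T₂] [Fintype Φ]
    (ppre : R₁ × R₂ → ℝ) (hpre0 : ∀ r, 0 ≤ ppre r) (hpre1 : ∑ r, ppre r = 1)
    (pmid : R₁ × R₂ → S₁ × S₂ → ℝ)
    (hmid0 : ∀ r s, 0 ≤ pmid r s) (hmid1 : ∀ r, ∑ s, pmid r s = 1)
    (q : R₁ → S₁ → ℝ)
    (hq : ∀ r₁ r₂ s₁, ∑ s₂, pmid (r₁, r₂) (s₁, s₂) = q r₁ s₁)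
    (μ : Φ → ℝ) (hμ0 : ∀ φ, 0 ≤ μ φ) (hμ1 : ∑ φ, μ φ = 1)
    (c₁ : T₁ → R₁ → S₁ → Φ → ℝ) (c₂ : T₂ → R₂ → S₂ → Φ → ℝ)
    (hc₁0 : ∀ t₁ r₁ s₁ φ, 0 ≤ c₁ t₁ r₁ s₁ φ) (hc₂0 : ∀ t₂ r₂ s₂ φ, 0 ≤ c₂ t₂ r₂ s₂ φ)
    (hc₁1 : ∀ r₁ s₁ φ, ∑ t₁, c₁ t₁ r₁ s₁ φ = 1) (hc₂1 : ∀ r₂ s₂ φ, ∑ t₂, c₂ t₂ r₂ s₂ φ = 1)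
    (p : T₁ → T₂ → ℝ)
    (hp : ∀ t₁ t₂, p t₁ t₂ =
      ∑ r₁, ∑ r₂, ∑ s₁, ∑ s₂, ∑ φ, μ φ * c₁ t₁ r₁ s₁ φ * c₂ t₂ r₂ s₂ φ *
        pmid (r₁, r₂) (s₁, s₂) * ppre (r₁, r₂)) :
    ∀ t₁, ∑ t₂, p t₁ t₂ =
      ∑ r₁, ∑ s₁, ∑ φ, μ φ * c₁ t₁ r₁ s₁ φ * q r₁ s₁ * (∑ r₂, ppre (r₁, r₂)) := by
  intro t₁
  -- One fixed `(r₁, r₂, s₁)`: `c₂` sums to one over `t₂`, and non-disturbance removes `s₂`.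
  have key : ∀ r₁ r₂ s₁,
      ∑ t₂, ∑ s₂, ∑ φ, μ φ * c₁ t₁ r₁ s₁ φ * c₂ t₂ r₂ s₂ φ *
        pmid (r₁, r₂) (s₁, s₂) * ppre (r₁, r₂) =
      ∑ φ, μ φ * c₁ t₁ r₁ s₁ φ * q r₁ s₁ * ppre (r₁, r₂) := by
    intro r₁ r₂ s₁
    calc
      _ = ∑ s₂, ∑ φ, ∑ t₂, μ φ * c₁ t₁ r₁ s₁ φ * c₂ t₂ r₂ s₂ φ *
            pmid (r₁, r₂) (s₁, s₂) * ppre (r₁, r₂) := by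
        rw [Finset.sum_comm]
        exact Finset.sum_congr rfl fun s₂ _ => Finset.sum_comm
      _ = ∑ s₂, ∑ φ, μ φ * c₁ t₁ r₁ s₁ φ * pmid (r₁, r₂) (s₁, s₂) * ppre (r₁, r₂) := by
        simp only [← Finset.sum_mul, ← Finset.mul_sum, hc₂1, mul_one]
      _ = _ := by
        rw [Finset.sum_comm]
        simp only [← Finset.sum_mul, ← Finset.mul_sum, hq]
  calc
    ∑ t₂, p t₁ t₂ = ∑ r₁, ∑ r₂, ∑ s₁, ∑ t₂, ∑ s₂, ∑ φ,
        μ φ * c₁ t₁ r₁ s₁ φ * c₂ t₂ r₂ s₂ φ *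
          pmid (r₁, r₂) (s₁, s₂) * ppre (r₁, r₂) := by
      simp only [hp]
      rw [Finset.sum_comm]
      refine Finset.sum_congr rfl fun r₁ _ => ?_
      rw [Finset.sum_comm]
      exact Finset.sum_congr rfl fun r₂ _ => Finset.sum_comm
    _ = ∑ r₁, ∑ r₂, ∑ s₁, ∑ φ, μ φ * c₁ t₁ r₁ s₁ φ * q r₁ s₁ * ppre (r₁, r₂) := by
      simp only [key]
    _ = _ := by
      refine Finset.sum_congr rfl fun r₁ _ => ?_
      rw [Finset.sum_comm]
      refine Finset.sum_congr rfl fun s₁ _ => ?_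
      rw [Finset.sum_comm]
      simp only [← Finset.mul_sum]
end

section
/- Let R₁, R₂, S₁, S₂, T₁, T₂ and Ξ, Ψ, Φ be finite types, and let p_Ξ, p_Ψ, p_Φ be probability distributions on Ξ, Ψ, Φ respectively. Suppose given nonnegative response functions a_i(r_i|ξ), b_i(s_i|r_i,ψ), c_i(t_i|r_i,s_i,φ) for i = 1, 2, each summing to 1 over its first argument, and define p_pre(r₁,r₂) = Σ_ξ p_Ξ(ξ) a₁(r₁|ξ) a₂(r₂|ξ), p_mid(r₁,r₂)(s₁,s₂) = Σ_ψ p_Ψ(ψ) b₁(s₁|r₁,ψ) b₂(s₂|r₂,ψ), and the wired distribution p(t₁,t₂) = Σ_{r₁,r₂,s₁,s₂,φ} p_Φ(φ) c₁(t₁,r₁,s₁,φ) c₂(t₂,r₂,s₂,φ) p_mid(r₁,r₂)(s₁,s₂) p_pre(r₁,r₂). Then p(t₁,t₂) admits a local hidden-variable factorization: p(t₁,t₂) = Σ_{(ξ,ψ,φ) ∈ Ξ×Ψ×Φ} p_Ξ(ξ) p_Ψ(ψ) p_Φ(φ) f₁(t₁|ξ,ψ,φ) f₂(t₂|ξ,ψ,φ),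 where f_i(t_i|ξ,ψ,φ) = Σ_{r_i,s_i} c_i(t_i|r_i,s_i,φ) b_i(s_i|r_i,ψ) a_i(r_i|ξ) are nonnegative and satisfy Σ_{t_i} f_i(t_i|ξ,ψ,φ) = 1. -/
/-!
Averaging a local model over its local variables again gives a local model. For a fixed value of
`(ξ, ψ, φ)` the two wires evolve independently, each through the composition
`t ← (r, s, φ)`, `s ← (r, ψ)`, `r ← ξ` of stochastic maps. So `fᵢ` is stochastic
(`wire_nonneg`, `wire_sum`), and expanding all products turns the wired distribution and the
claimed factorization into the same sum over `(r₁, r₂, s₁, s₂, φ, ψ, ξ)`, up to the order of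
summation (`wired_eq`).
-/

open Finset

/-- The response function of a single wire is nonnegative. -/
private lemma wire_nonneg {R S : Type} [Fintype R] [Fintype S]
    {a : R → ℝ} {b c : R → S → ℝ}
    (ha : ∀ r, 0 ≤ a r) (hb : ∀ r s, 0 ≤ b r s) (hc : ∀ r s, 0 ≤ c r s) :
    0 ≤ ∑ r, ∑ s, c r s * b r s * a r :=
  sum_nonneg fun r _ => sum_nonneg fun s _ => mul_nonneg (mul_nonneg (hc r s) (hb r s)) (ha r)

/-- The response function of a single wire is normalized: sum out `t`, then `s`, then `r`. -/
private lemma wire_sum {R S T : Type} [Fintype R] [Fintype S] [Fintype T]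
    {a : R → ℝ} {b : R → S → ℝ} {c : T → R → S → ℝ}
    (ha : ∑ r, a r = 1) (hb : ∀ r, ∑ s, b r s = 1) (hc : ∀ r s, ∑ t, c t r s = 1) :
    ∑ t, ∑ r, ∑ s, c t r s * b r s * a r = 1 := by
  rw [sum_comm, ← ha]
  refine sum_congr rfl fun r _ => ?_
  rw [sum_comm]
  simp_rw [← sum_mul, hc, one_mul, hb, one_mul]

private lemma mul_sum_mul_sum {ι κ : Type} [Fintype ι] [Fintype κ] (k : ℝ) (f : ι → ℝ)
    (g : κ → ℝ) : k * (∑ i, f i) * (∑ j, g j) = ∑ i, ∑ j, k * f i * g j := by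
  rw [mul_assoc, sum_mul_sum]
  simp_rw [mul_sum, mul_assoc]

/-- The interchange of summations behind the factorization, at fixed outcomes `t₁`, `t₂`. -/
private lemma wired_eq {R₁ R₂ S₁ S₂ Ξ Ψ Φ : Type} [Fintype R₁] [Fintype R₂] [Fintype S₁]
    [Fintype S₂] [Fintype Ξ] [Fintype Ψ] [Fintype Φ]
    (pΞ : Ξ → ℝ) (pΨ : Ψ → ℝ) (pΦ : Φ → ℝ) (a₁ : R₁ → Ξ → ℝ) (a₂ : R₂ → Ξ → ℝ)
    (b₁ : S₁ → R₁ → Ψ → ℝ) (b₂ : S₂ → R₂ → Ψ → ℝ)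
    (c₁ : R₁ → S₁ → Φ → ℝ) (c₂ : R₂ → S₂ → Φ → ℝ) :
    ∑ r₁, ∑ r₂, ∑ s₁, ∑ s₂, ∑ φ, pΦ φ * c₁ r₁ s₁ φ * c₂ r₂ s₂ φ *
        (∑ ψ, pΨ ψ * b₁ s₁ r₁ ψ * b₂ s₂ r₂ ψ) * (∑ ξ, pΞ ξ * a₁ r₁ ξ * a₂ r₂ ξ) =
      ∑ w : Ξ × Ψ × Φ, pΞ w.1 * pΨ w.2.1 * pΦ w.2.2 *
        (∑ r₁, ∑ s₁, c₁ r₁ s₁ w.2.2 * b₁ s₁ r₁ w.2.1 * a₁ r₁ w.1) *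
        (∑ r₂, ∑ s₂, c₂ r₂ s₂ w.2.2 * b₂ s₂ r₂ w.2.1 * a₂ r₂ w.1) := by
  have hL : ∀ (r₁ : R₁) (r₂ : R₂) (s₁ : S₁) (s₂ : S₂) (φ : Φ),
      pΦ φ * c₁ r₁ s₁ φ * c₂ r₂ s₂ φ *
        (∑ ψ, pΨ ψ * b₁ s₁ r₁ ψ * b₂ s₂ r₂ ψ) * (∑ ξ, pΞ ξ * a₁ r₁ ξ * a₂ r₂ ξ) =
      ∑ ψ, ∑ ξ, pΦ φ * c₁ r₁ s₁ φ * c₂ r₂ s₂ φ *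
        (pΨ ψ * b₁ s₁ r₁ ψ * b₂ s₂ r₂ ψ) * (pΞ ξ * a₁ r₁ ξ * a₂ r₂ ξ) := by
    intros
    exact mul_sum_mul_sum _ _ _
  have hR : ∀ w : Ξ × Ψ × Φ, pΞ w.1 * pΨ w.2.1 * pΦ w.2.2 *
        (∑ r₁, ∑ s₁, c₁ r₁ s₁ w.2.2 * b₁ s₁ r₁ w.2.1 * a₁ r₁ w.1) *
        (∑ r₂, ∑ s₂, c₂ r₂ s₂ w.2.2 * b₂ s₂ r₂ w.2.1 * a₂ r₂ w.1) =
      ∑ x : R₁ × S₁, ∑ y : R₂ × S₂, pΞ w.1 * pΨ w.2.1 * pΦ w.2.2 *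
        (c₁ x.1 x.2 w.2.2 * b₁ x.2 x.1 w.2.1 * a₁ x.1 w.1) *
        (c₂ y.1 y.2 w.2.2 * b₂ y.2 y.1 w.2.1 * a₂ y.1 w.1) := by
    intro w
    rw [← Fintype.sum_prod_type', ← Fintype.sum_prod_type', mul_sum_mul_sum]
  simp_rw [hL, hR, ← Fintype.sum_prod_type']
  exact Fintype.sum_equiv
    { toFun := fun ⟨r₁, r₂, s₁, s₂, φ, ψ, ξ⟩ => ⟨⟨ξ, ψ, φ⟩, ⟨r₁, s₁⟩, ⟨r₂, s₂⟩⟩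
      invFun := fun ⟨⟨ξ, ψ, φ⟩, ⟨r₁, s₁⟩, ⟨r₂, s₂⟩⟩ => ⟨r₁, r₂, s₁, s₂, φ, ψ, ξ⟩
      left_inv := fun _ => rfl
      right_inv := fun _ => rfl } _ _ fun _ => by dsimp; ring

/-- Non-contextuality preservation under non-contextual wirings (two-button instance):
the wired distribution admits a local hidden-variable factorization over `Ξ × Ψ × Φ`. -/
theorem wiring_preserves_noncontextuality
    {R₁ R₂ S₁ S₂ T₁ T₂ Ξ Ψ Φ : Type} [Fintype R₁] [Fintype R₂] [Fintype S₁] [Fintype S₂]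
    [Fintype T₁] [Fintype T₂] [Fintype Ξ] [Fintype Ψ] [Fintype Φ]
    (pΞ : Ξ → ℝ) (hΞ0 : ∀ ξ, 0 ≤ pΞ ξ) (hΞ1 : ∑ ξ, pΞ ξ = 1)
    (pΨ : Ψ → ℝ) (hΨ0 : ∀ ψ, 0 ≤ pΨ ψ) (hΨ1 : ∑ ψ, pΨ ψ = 1)
    (pΦ : Φ → ℝ) (hΦ0 : ∀ φ, 0 ≤ pΦ φ) (hΦ1 : ∑ φ, pΦ φ = 1)
    (a₁ : R₁ → Ξ → ℝ) (a₂ : R₂ → Ξ → ℝ)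
    (ha₁0 : ∀ r₁ ξ, 0 ≤ a₁ r₁ ξ) (ha₂0 : ∀ r₂ ξ, 0 ≤ a₂ r₂ ξ)
    (ha₁1 : ∀ ξ, ∑ r₁, a₁ r₁ ξ = 1) (ha₂1 : ∀ ξ, ∑ r₂, a₂ r₂ ξ = 1)
    (b₁ : S₁ → R₁ → Ψ → ℝ) (b₂ : S₂ → R₂ → Ψ → ℝ)
    (hb₁0 : ∀ s₁ r₁ ψ, 0 ≤ b₁ s₁ r₁ ψ) (hb₂0 : ∀ s₂ r₂ ψ, 0 ≤ b₂ s₂ r₂ ψ)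
    (hb₁1 : ∀ r₁ ψ, ∑ s₁, b₁ s₁ r₁ ψ = 1) (hb₂1 : ∀ r₂ ψ, ∑ s₂, b₂ s₂ r₂ ψ = 1)
    (c₁ : T₁ → R₁ → S₁ → Φ → ℝ) (c₂ : T₂ → R₂ → S₂ → Φ → ℝ)
    (hc₁0 : ∀ t₁ r₁ s₁ φ, 0 ≤ c₁ t₁ r₁ s₁ φ) (hc₂0 : ∀ t₂ r₂ s₂ φ, 0 ≤ c₂ t₂ r₂ s₂ φ)
    (hc₁1 : ∀ r₁ s₁ φ, ∑ t₁, c₁ t₁ r₁ s₁ φ = 1) (hc₂1 : ∀ r₂ s₂ φ, ∑ t₂, c₂ t₂ r₂ s₂ φ = 1)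
    (ppre : R₁ × R₂ → ℝ)
    (hppre : ∀ r₁ r₂, ppre (r₁, r₂) = ∑ ξ, pΞ ξ * a₁ r₁ ξ * a₂ r₂ ξ)
    (pmid : R₁ × R₂ → S₁ × S₂ → ℝ)
    (hpmid : ∀ r₁ r₂ s₁ s₂, pmid (r₁, r₂) (s₁, s₂) = ∑ ψ, pΨ ψ * b₁ s₁ r₁ ψ * b₂ s₂ r₂ ψ)
    (p : T₁ → T₂ → ℝ)
    (hp : ∀ t₁ t₂, p t₁ t₂ =
      ∑ r₁, ∑ r₂, ∑ s₁, ∑ s₂, ∑ φ, pΦ φ * c₁ t₁ r₁ s₁ φ * c₂ t₂ r₂ s₂ φ *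
        pmid (r₁, r₂) (s₁, s₂) * ppre (r₁, r₂))
    (f₁ : T₁ → Ξ → Ψ → Φ → ℝ) (f₂ : T₂ → Ξ → Ψ → Φ → ℝ)
    (hf₁ : ∀ t₁ ξ ψ φ, f₁ t₁ ξ ψ φ = ∑ r₁, ∑ s₁, c₁ t₁ r₁ s₁ φ * b₁ s₁ r₁ ψ * a₁ r₁ ξ)
    (hf₂ : ∀ t₂ ξ ψ φ, f₂ t₂ ξ ψ φ = ∑ r₂, ∑ s₂, c₂ t₂ r₂ s₂ φ * b₂ s₂ r₂ ψ * a₂ r₂ ξ) :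
    (∀ t₁ ξ ψ φ, 0 ≤ f₁ t₁ ξ ψ φ) ∧ (∀ ξ ψ φ, ∑ t₁, f₁ t₁ ξ ψ φ = 1) ∧
    (∀ t₂ ξ ψ φ, 0 ≤ f₂ t₂ ξ ψ φ) ∧ (∀ ξ ψ φ, ∑ t₂, f₂ t₂ ξ ψ φ = 1) ∧
    (∀ t₁ t₂, p t₁ t₂ = ∑ w : Ξ × Ψ × Φ,
      pΞ w.1 * pΨ w.2.1 * pΦ w.2.2 * f₁ t₁ w.1 w.2.1 w.2.2 * f₂ t₂ w.1 w.2.1 w.2.2) := by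
  refine ⟨fun t ξ ψ φ => ?_, fun ξ ψ φ => ?_, fun t ξ ψ φ => ?_, fun ξ ψ φ => ?_,
    fun t₁ t₂ => ?_⟩
  · rw [hf₁]
    exact wire_nonneg (fun r => ha₁0 r ξ) (fun r s => hb₁0 s r ψ) (fun r s => hc₁0 t r s φ)
  · simp_rw [hf₁]
    exact wire_sum (ha₁1 ξ) (fun r => hb₁1 r ψ) (fun r s => hc₁1 r s φ)
  · rw [hf₂]
    exact wire_nonneg (fun r => ha₂0 r ξ) (fun r s => hb₂0 s r ψ) (fun r s => hc₂0 t r s φ)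
  · simp_rw [hf₂]
    exact wire_sum (ha₂1 ξ) (fun r => hb₂1 r ψ) (fun r s => hc₂1 r s φ)
  · simp_rw [hp, hpmid, hppre, hf₁, hf₂]
    exact wired_eq pΞ pΨ pΦ a₁ a₂ b₁ b₂ (c₁ t₁) (c₂ t₂)
end

section
/- For every behavior B of a compatibility scenario Υ, CF(B) = 0 if and only if B is non-contextual. -/
/-!
If `B` is non-contextual then the weight `0` is admissible, so the infimum is `0`.

Conversely, an admissible weight `l` yields a global distribution `d` with
`B γ s - marg γ d s = l * (p' γ s - pnc γ s)`, so the total discrepancy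
`defect C B d = ∑ γ ∈ C, ∑ s, |B γ s - marg γ d s|` is at most `l` times a constant
(`exists_defect_le`). Admissible weights exist, since `l = 1` is one (`one_admissible`), so a
vanishing infimum makes them arbitrarily small. The standard simplex of global distributions is
compact and the discrepancy is continuous, so it has a minimizer; its discrepancy is bounded by
arbitrarily small numbers, hence is `0`, and the minimizer is a global section of `B`.
-/

open Finset

/-- A family assigning to each context `γ` a real-valued function on joint
outcome assignments `↥γ → O`. Behaviors are such families. -/
abbrev Fam (M O : Type) : Type := (γ : Finset M) → (↥γ → O) → ℝ

variable {M O : Type} [Fintype M] [DecidableEq M] [Fintype O] [DecidableEq O]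

/-- `p` is a behavior for the scenario with contexts `C`: on every context it is a
probability distribution on joint outcomes. -/
def IsBehavior (C : Finset (Finset M)) (p : Fam M O) : Prop :=
  ∀ γ ∈ C, (∀ s, 0 ≤ p γ s) ∧ ∑ s, p γ s = 1

/-- Marginal of a global distribution `d` on `O^M` on the context `γ`. -/
def marg (γ : Finset M) (d : (M → O) → ℝ) (s : ↥γ → O) : ℝ :=
  ∑ f : M → O, if (fun x : ↥γ => f x.1) = s then d f else 0

/-- A behavior is non-contextual when it admits a global section: a probability
distribution on `O^M` marginalizing to `p γ` on every context `γ ∈ C`. -/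
def NonContextual (C : Finset (Finset M)) (p : Fam M O) : Prop :=
  ∃ d : (M → O) → ℝ, (∀ f, 0 ≤ d f) ∧ (∑ f, d f = 1) ∧
    ∀ γ ∈ C, ∀ s, p γ s = marg γ d s

/-- The contextual fraction: the infimum of `l ∈ [0,1]` such that the behavior
decomposes as `l B' + (1-l) B^NC` with `B'` a behavior and `B^NC` non-contextual. -/
noncomputable def CF (C : Finset (Finset M)) (p : Fam M O) : ℝ :=
  sInf {l : ℝ | 0 ≤ l ∧ l ≤ 1 ∧
    ∃ p' pnc : Fam M O, IsBehavior C p' ∧ IsBehavior C pnc ∧ NonContextual C pnc ∧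
      ∀ γ ∈ C, ∀ s, p γ s = l * p' γ s + (1 - l) * pnc γ s}

theorem sum_marg (γ : Finset M) (d : (M → O) → ℝ) : ∑ s, marg γ d s = ∑ f, d f := by
  unfold marg
  rw [Finset.sum_comm]
  simp

theorem marg_isBehavior (C : Finset (Finset M)) {d : (M → O) → ℝ} (h0 : ∀ f, 0 ≤ d f)
    (h1 : ∑ f, d f = 1) : IsBehavior C (fun γ s => marg γ d s) := by
  refine fun γ _ => ⟨fun s => Finset.sum_nonneg fun f _ => ?_, (sum_marg γ d).trans h1⟩
  split_ifs
  exacts [h0 f, le_rfl]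

theorem IsBehavior.le_one {C : Finset (Finset M)} {p : Fam M O} (hp : IsBehavior C p)
    {γ : Finset M} (hγ : γ ∈ C) (s : ↥γ → O) : p γ s ≤ 1 :=
  (hp γ hγ).2 ▸ Finset.single_le_sum (fun t _ => (hp γ hγ).1 t) (Finset.mem_univ s)

theorem continuous_marg (γ : Finset M) (s : ↥γ → O) :
    Continuous fun d : (M → O) → ℝ => marg γ d s := by
  refine continuous_finsetSum _ fun f _ => ?_
  split_ifs
  exacts [continuous_apply f, continuous_const]

/-- The total `ℓ¹` discrepancy, over all contexts, between the family `p` and the marginals of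
the global function `d`. It vanishes exactly when `d` marginalizes to `p` on every context. -/
def defect (C : Finset (Finset M)) (p : Fam M O) (d : (M → O) → ℝ) : ℝ :=
  ∑ γ ∈ C, ∑ s, |p γ s - marg γ d s|

theorem continuous_defect (C : Finset (Finset M)) (p : Fam M O) : Continuous (defect C p) :=
  continuous_finsetSum _ fun γ _ => continuous_finsetSum _ fun s _ =>
    (continuous_const.sub (continuous_marg γ s)).abs

theorem eq_marg_of_defect_nonpos {C : Finset (Finset M)} {p : Fam M O} {d : (M → O) → ℝ}
    (h : defect C p d ≤ 0) : ∀ γ ∈ C, ∀ s, p γ s = marg γ d s := by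
  intro γ hγ s
  have h1 : |p γ s - marg γ d s| ≤ ∑ t, |p γ t - marg γ d t| :=
    Finset.single_le_sum (f := fun t => |p γ t - marg γ d t|)
      (fun t _ => abs_nonneg _) (Finset.mem_univ s)
  have h2 : ∑ t, |p γ t - marg γ d t| ≤ defect C p d :=
    Finset.single_le_sum (f := fun γ => ∑ t, |p γ t - marg γ d t|)
      (fun γ _ => Finset.sum_nonneg fun t _ => abs_nonneg _) hγ
  exact sub_eq_zero.mp (abs_nonpos_iff.mp (h1.trans (h2.trans h)))

/-- The number of pairs consisting of a context and a joint outcome on it. -/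
def numEvents (C : Finset (Finset M)) (O : Type) [Fintype O] : ℝ :=
  ∑ γ ∈ C, ∑ _s : ↥γ → O, 1

/-- A decomposition of weight `l` puts a global distribution within `l` of `p` on each event:
the two components take values in `[0, 1]`, so they differ by at most `1`. -/
theorem exists_defect_le {C : Finset (Finset M)} {p p' pnc : Fam M O} {l : ℝ} (hl : 0 ≤ l)
    (hp' : IsBehavior C p') (hb : IsBehavior C pnc) (hnc : NonContextual C pnc)
    (h : ∀ γ ∈ C, ∀ s, p γ s = l * p' γ s + (1 - l) * pnc γ s) :
    ∃ d ∈ stdSimplex ℝ (M → O), defect C p d ≤ l * numEvents C O := by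
  obtain ⟨d, h0, h1, hd⟩ := hnc
  refine ⟨d, ⟨h0, h1⟩, ?_⟩
  simp only [defect, numEvents, Finset.mul_sum]
  refine Finset.sum_le_sum fun γ hγ => Finset.sum_le_sum fun s _ => ?_
  have e : p γ s - marg γ d s = l * (p' γ s - pnc γ s) := by
    rw [← hd γ hγ s, h γ hγ s]
    ring
  rw [e, abs_mul, abs_of_nonneg hl]
  refine mul_le_mul_of_nonneg_left (abs_le.mpr ⟨?_, ?_⟩) hl
  · linarith [(hp' γ hγ).1 s, hb.le_one hγ s]
  · linarith [(hb γ hγ).1 s, hp'.le_one hγ s]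

/-- The weight `1` is always admissible; the non-contextual component is then irrelevant and may
be taken to be any deterministic global assignment. -/
theorem one_admissible [Nonempty O] {C : Finset (Finset M)} {p : Fam M O}
    (hp : IsBehavior C p) :
    ∃ p' pnc : Fam M O, IsBehavior C p' ∧ IsBehavior C pnc ∧ NonContextual C pnc ∧
      ∀ γ ∈ C, ∀ s, p γ s = 1 * p' γ s + (1 - 1) * pnc γ s := by
  obtain ⟨h0, h1⟩ := single_mem_stdSimplex ℝ (Classical.arbitrary (M → O))
  exact ⟨p, _, hp, marg_isBehavior C h0 h1, ⟨_, h0, h1, fun _ _ _ => rfl⟩,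
    fun γ _ s => by ring⟩

/-- Faithfulness of the contextual fraction: `CF B = 0` iff `B` is non-contextual. -/
theorem cf_eq_zero_iff_noncontextual [Nonempty O]
    (C : Finset (Finset M)) (B : Fam M O) (hB : IsBehavior C B) :
    CF C B = 0 ↔ NonContextual C B := by
  constructor
  · intro h
    obtain ⟨d, hd, hmin⟩ := (isCompact_stdSimplex ℝ (M → O)).exists_isMinOn
      ⟨Pi.single _ 1, single_mem_stdSimplex ℝ (Classical.arbitrary (M → O))⟩
      (continuous_defect C B).continuousOn
    refine ⟨d, hd.1, hd.2, eq_marg_of_defect_nonpos (le_of_forall_pos_lt_add fun ε hε => ?_)⟩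
    have hN : 0 ≤ numEvents C O :=
      Finset.sum_nonneg fun _ _ => Finset.sum_nonneg fun _ _ => zero_le_one
    -- The `+ 1` keeps the divisor positive when `C` is empty.
    have hδ : CF C B < ε / (numEvents C O + 1) := by rw [h]; positivity
    unfold CF at hδ
    have key := fun hne => exists_lt_of_csInf_lt hne hδ
    obtain ⟨l, ⟨hl0, -, p', pnc, hp', hb, hnc, hdec⟩, hlt⟩ :=
      key ⟨1, zero_le_one, le_rfl, one_admissible hB⟩
    obtain ⟨d', hd', hle⟩ := exists_defect_le hl0 hp' hb hnc hdec
    have h1 : defect C B d ≤ defect C B d' := hmin hd'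
    rw [lt_div_iff₀ (by positivity)] at hlt
    linarith
  · intro h
    refine le_antisymm (csInf_le ⟨0, fun l hl => hl.1⟩ ?_) (Real.sInf_nonneg fun l hl => hl.1)
    exact ⟨le_rfl, zero_le_one, B, B, hB, hB, h, fun γ _ s => by ring⟩
end

section
/- The contextual fraction is convex: if B¹, …, Bᵏ are behaviors for the same compatibility scenario Υ and π₁, …, π_k are nonnegative reals with Σ_i π_i = 1, then CF(Σ_i π_i B^i) ≤ Σ_i π_i CF(B^i), where Σ_i π_i B^i is the behavior with distributions Σ_i π_i p^i_γ for each context γ. -/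
/-!
Behaviors form a convex set, and so do non-contextual behaviors (global distributions mix, and
marginalization is linear). Hence, if `B i = l i * p' i + (1 - l i) * pnc i` for each `i`, the
mixture `∑ π i * B i` decomposes with weight `l = ∑ π i * l i`: the `p' i` are averaged with weights
`π i * l i` and the `pnc i` with weights `π i * (1 - l i)` (`decomp_mix`). Taking every `l i` within
`ε` of `CF C (B i)` gives the inequality up to `ε`.

When no non-contextual behavior exists (`O` empty and `M` nonempty), every infimum defining a
contextual fraction is over the empty set, and both sides are `0`. Otherwise weight `1` is always
admissible for a behavior, so these infima are over nonempty sets.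
-/

open Finset

variable {M O : Type} [Fintype M] [DecidableEq M] [Fintype O] [DecidableEq O]

/-- The set of admissible weights `l` whose infimum is the contextual fraction. -/
def decompWeights (C : Finset (Finset M)) (p : Fam M O) : Set ℝ :=
  {l : ℝ | 0 ≤ l ∧ l ≤ 1 ∧
    ∃ p' pnc : Fam M O, IsBehavior C p' ∧ IsBehavior C pnc ∧ NonContextual C pnc ∧
      ∀ γ ∈ C, ∀ s, p γ s = l * p' γ s + (1 - l) * pnc γ s}

theorem marg_combo (γ : Finset M) (a b : ℝ) (d e : (M → O) → ℝ) (s : ↥γ → O) :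
    marg γ (fun f => a * d f + b * e f) s = a * marg γ d s + b * marg γ e s := by
  simp only [marg, mul_sum, ← sum_add_distrib]
  refine sum_congr rfl fun f _ => ?_
  split_ifs <;> simp

theorem convex_isBehavior (C : Finset (Finset M)) :
    Convex ℝ {p : Fam M O | IsBehavior C p} := by
  intro p hp q hq a b ha hb hab γ hγ
  obtain ⟨hp0, hp1⟩ := hp γ hγ
  obtain ⟨hq0, hq1⟩ := hq γ hγ
  refine ⟨fun s => add_nonneg (mul_nonneg ha (hp0 s)) (mul_nonneg hb (hq0 s)), ?_⟩
  simp only [Pi.add_apply, Pi.smul_apply, smul_eq_mul, sum_add_distrib, ← mul_sum, hp1, hq1]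
  linarith

theorem convex_nonContextual (C : Finset (Finset M)) :
    Convex ℝ {p : Fam M O | NonContextual C p} := by
  rintro p ⟨d, hd0, hd1, hd⟩ q ⟨e, he0, he1, he⟩ a b ha hb hab
  refine ⟨fun f => a * d f + b * e f,
    fun f => add_nonneg (mul_nonneg ha (hd0 f)) (mul_nonneg hb (he0 f)), ?_, ?_⟩
  · simp only [sum_add_distrib, ← mul_sum, hd1, he1]
    linarith
  · intro γ hγ s
    simp only [Pi.add_apply, Pi.smul_apply, smul_eq_mul, marg_combo, hd γ hγ s, he γ hγ s]

/-- A nonnegative combination of points of a convex set is its total weight times a point of the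
set; the existence of an index makes this hold also when the total weight is zero. -/
theorem exists_sum_smul_eq {E ι : Type*} [AddCommGroup E] [Module ℝ E] [Fintype ι] [Nonempty ι]
    {K : Set E} (hK : Convex ℝ K) (w : ι → ℝ) (hw : ∀ i, 0 ≤ w i) (q : ι → E)
    (hq : ∀ i, q i ∈ K) : ∃ x ∈ K, ∑ i, w i • q i = (∑ i, w i) • x := by
  rcases (sum_nonneg fun i _ => hw i : 0 ≤ ∑ i, w i).eq_or_lt with h | h
  · have h0 : ∀ i, w i = 0 := fun i =>
      (sum_eq_zero_iff_of_nonneg fun i _ => hw i).1 h.symm i (mem_univ i)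
    exact ⟨q (Classical.arbitrary ι), hq _, by simp [h0]⟩
  · refine ⟨univ.centerMass w q, hK.centerMass_mem (fun i _ => hw i) h fun i _ => hq i, ?_⟩
    rw [Finset.centerMass, smul_inv_smul₀ h.ne']

theorem decomp_mix (C : Finset (Finset M)) {k : ℕ} (B : Fin k → Fam M O) (π l : Fin k → ℝ)
    (hπ0 : ∀ i, 0 ≤ π i) (hπ1 : ∑ i, π i = 1) (hl : ∀ i, l i ∈ decompWeights C (B i)) :
    ∑ i, π i * l i ∈ decompWeights C (fun γ s => ∑ i, π i * B i γ s) := by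
  have : Nonempty (Fin k) := by
    by_contra h
    rw [not_nonempty_iff] at h
    simp at hπ1
  choose hl0 hl1 p' pnc hp' hb hnc heq using hl
  have hsum : ∑ i, π i * (1 - l i) = 1 - ∑ i, π i * l i := by
    simp only [mul_sub, mul_one, sum_sub_distrib, hπ1]
  obtain ⟨x, hx, hxe⟩ := exists_sum_smul_eq (convex_isBehavior C) (fun i => π i * l i)
    (fun i => mul_nonneg (hπ0 i) (hl0 i)) p' hp'
  obtain ⟨y, ⟨hyb, hyn⟩, hye⟩ := exists_sum_smul_eq
    ((convex_isBehavior C).inter (convex_nonContextual C)) (fun i => π i * (1 - l i))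
    (fun i => mul_nonneg (hπ0 i) (sub_nonneg.2 (hl1 i))) pnc (fun i => ⟨hb i, hnc i⟩)
  have hnonneg : 0 ≤ ∑ i, π i * (1 - l i) :=
    sum_nonneg fun i _ => mul_nonneg (hπ0 i) (sub_nonneg.2 (hl1 i))
  refine ⟨sum_nonneg fun i _ => mul_nonneg (hπ0 i) (hl0 i), by linarith, x, y, hx, hyb, hyn, ?_⟩
  intro γ hγ s
  have h1 := congrFun (congrFun hxe γ) s
  have h2 := congrFun (congrFun hye γ) s
  simp only [Finset.sum_apply, Pi.smul_apply, smul_eq_mul] at h1 h2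
  rw [← hsum, ← h1, ← h2, ← sum_add_distrib]
  refine sum_congr rfl fun i _ => ?_
  rw [heq i γ hγ s]
  ring

/-- Convexity of the contextual fraction. -/
theorem cf_convex (C : Finset (Finset M)) (k : ℕ) (B : Fin k → Fam M O) (π : Fin k → ℝ)
    (hB : ∀ i, IsBehavior C (B i)) (hπ0 : ∀ i, 0 ≤ π i) (hπ1 : ∑ i, π i = 1) :
    CF C (fun γ s => ∑ i, π i * B i γ s) ≤ ∑ i, π i * CF C (B i) := by
  have hCF : ∀ p : Fam M O, CF C p = sInf (decompWeights C p) := fun _ => rfl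
  by_cases hex : ∃ q : Fam M O, IsBehavior C q ∧ NonContextual C q
  · obtain ⟨q, hqb, hqn⟩ := hex
    have hne : ∀ i, (decompWeights C (B i)).Nonempty := fun i =>
      ⟨1, zero_le_one, le_rfl, B i, q, hB i, hqb, hqn, fun γ _ s => by ring⟩
    refine le_of_forall_pos_le_add fun ε hε => ?_
    have happrox : ∀ i, ∃ l ∈ decompWeights C (B i), l < CF C (B i) + ε := fun i =>
      exists_lt_of_csInf_lt (hne i) (lt_add_of_pos_right _ hε)
    choose l hl hlt using happrox
    calc CF C (fun γ s => ∑ i, π i * B i γ s)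
        ≤ ∑ i, π i * l i :=
          csInf_le ⟨0, fun _ h => h.1⟩ (decomp_mix C B π l hπ0 hπ1 hl)
      _ ≤ ∑ i, π i * (CF C (B i) + ε) :=
          sum_le_sum fun i _ => mul_le_mul_of_nonneg_left (hlt i).le (hπ0 i)
      _ = ∑ i, π i * CF C (B i) + ε := by
          simp only [mul_add, sum_add_distrib, ← sum_mul, hπ1, one_mul]
  · have hempty : ∀ p : Fam M O, CF C p = 0 := by
      intro p
      have : decompWeights C p = ∅ := by
        rw [Set.eq_empty_iff_forall_notMem]
        rintro l ⟨-, -, -, y, -, hyb, hyn, -⟩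
        exact hex ⟨y, hyb, hyn⟩
      rw [hCF, this, Real.sInf_empty]
    simp [hempty]
end

section
/- If B₁ is a non-contextual behavior on Υ₁ = (M₁, C₁, O) and B₂ is a non-contextual behavior on Υ₂ = (M₂, C₂, O) with M₁ and M₂ disjoint, then both the product B₁ ⊗ B₂ and the controlled choice B₁ & B₂ are non-contextual behaviors on their respective scenarios. -/
/-!
If `d₁` and `d₂` are global sections of the two behaviors, the product distribution
`d₁ (f ∘ inl) * d₂ (f ∘ inr)` on `O ^ (M₁ ⊕ M₂)` is a global section of both the product and the
controlled choice: its marginal on `γ₁ ∪ γ₂` is the product of the marginals (`marg_joinCtx`), and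
its marginal on a context lying in one summand is the marginal of that factor, because the other
factor has total mass one (`marg_map_inl`, `marg_map_inr`).
-/

open Finset

variable {M O : Type} [Fintype M] [DecidableEq M] [Fintype O] [DecidableEq O]

variable {M₁ M₂ : Type} [Fintype M₁] [DecidableEq M₁] [Fintype M₂] [DecidableEq M₂]

/-- Embedding of the first set of measurements into the disjoint union. -/
def inlEmb (M₁ M₂ : Type) : M₁ ↪ M₁ ⊕ M₂ := ⟨Sum.inl, Sum.inl_injective⟩

/-- Embedding of the second set of measurements into the disjoint union. -/
def inrEmb (M₁ M₂ : Type) : M₂ ↪ M₁ ⊕ M₂ := ⟨Sum.inr, Sum.inr_injective⟩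

/-- The context `γ₁ ∪ γ₂` inside the disjoint union of measurements. -/
def joinCtx (γ₁ : Finset M₁) (γ₂ : Finset M₂) : Finset (M₁ ⊕ M₂) :=
  γ₁.map (inlEmb M₁ M₂) ∪ γ₂.map (inrEmb M₁ M₂)

/-- Contexts of the product scenario: `{γ₁ ∪ γ₂ : γ₁ ∈ C₁, γ₂ ∈ C₂}`. -/
def prodC (C₁ : Finset (Finset M₁)) (C₂ : Finset (Finset M₂)) : Finset (Finset (M₁ ⊕ M₂)) :=
  (C₁ ×ˢ C₂).image fun gg => joinCtx gg.1 gg.2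

/-- Contexts of the controlled-choice scenario: `C₁ ∪ C₂`. -/
def ccC (C₁ : Finset (Finset M₁)) (C₂ : Finset (Finset M₂)) : Finset (Finset (M₁ ⊕ M₂)) :=
  C₁.image (fun γ => γ.map (inlEmb M₁ M₂)) ∪ C₂.image (fun γ => γ.map (inrEmb M₁ M₂))

/-- Restriction of a joint outcome assignment on `γ₁ ∪ γ₂` to `γ₁`. -/
def restr1 (γ₁ : Finset M₁) (γ₂ : Finset M₂) (s : ↥(joinCtx γ₁ γ₂) → O) : ↥γ₁ → O :=
  fun x => s ⟨Sum.inl x.1, Finset.mem_union_left _ (Finset.mem_map_of_mem _ x.2)⟩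

/-- Restriction of a joint outcome assignment on `γ₁ ∪ γ₂` to `γ₂`. -/
def restr2 (γ₁ : Finset M₁) (γ₂ : Finset M₂) (s : ↥(joinCtx γ₁ γ₂) → O) : ↥γ₂ → O :=
  fun x => s ⟨Sum.inr x.1, Finset.mem_union_right _ (Finset.mem_map_of_mem _ x.2)⟩

/-- Identification of outcome assignments on the copy of `γ ∈ C₁` inside `M₁ ⊕ M₂`
with outcome assignments on `γ`. -/
def restrL (γ : Finset M₁) (s : ↥(γ.map (inlEmb M₁ M₂)) → O) : ↥γ → O :=
  fun x => s ⟨Sum.inl x.1, Finset.mem_map_of_mem _ x.2⟩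

/-- Identification of outcome assignments on the copy of `γ ∈ C₂` inside `M₁ ⊕ M₂`
with outcome assignments on `γ`. -/
def restrR (γ : Finset M₂) (s : ↥(γ.map (inrEmb M₁ M₂)) → O) : ↥γ → O :=
  fun x => s ⟨Sum.inr x.1, Finset.mem_map_of_mem _ x.2⟩

/-- Since `O ^ (M₁ ⊕ M₂) ≃ O ^ M₁ × O ^ M₂`, a sum whose summand separates is a product of sums. -/
theorem sum_sep (F : (M₁ → O) → ℝ) (G : (M₂ → O) → ℝ) :
    ∑ f : M₁ ⊕ M₂ → O, F (f ∘ Sum.inl) * G (f ∘ Sum.inr) = (∑ f, F f) * ∑ g, G g := by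
  rw [Finset.sum_mul_sum, ← Fintype.sum_prod_type']
  exact Fintype.sum_equiv (Equiv.sumArrowEquivProdArrow M₁ M₂ O) _ _ fun f => rfl

/-- The product of two distributions on global assignments, seen on the disjoint union. -/
def prodDist (d₁ : (M₁ → O) → ℝ) (d₂ : (M₂ → O) → ℝ) (f : M₁ ⊕ M₂ → O) : ℝ :=
  d₁ (f ∘ Sum.inl) * d₂ (f ∘ Sum.inr)

theorem marg_joinCtx (d₁ : (M₁ → O) → ℝ) (d₂ : (M₂ → O) → ℝ) (γ₁ : Finset M₁) (γ₂ : Finset M₂)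
    (s : ↥(joinCtx γ₁ γ₂) → O) :
    marg (joinCtx γ₁ γ₂) (prodDist d₁ d₂) s =
      marg γ₁ d₁ (restr1 γ₁ γ₂ s) * marg γ₂ d₂ (restr2 γ₁ γ₂ s) := by
  unfold marg
  rw [← sum_sep]
  refine Finset.sum_congr rfl fun f _ => ?_
  rw [ite_zero_mul_ite_zero]
  refine if_congr ?_ rfl rfl
  constructor
  · rintro rfl
    exact ⟨rfl, rfl⟩
  · rintro ⟨ha, hb⟩
    funext ⟨x, hx⟩
    rcases x with x | x
    · have hx' : x ∈ γ₁ := by simpa [joinCtx, inlEmb, inrEmb] using hx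
      exact congrFun ha ⟨x, hx'⟩
    · have hx' : x ∈ γ₂ := by simpa [joinCtx, inlEmb, inrEmb] using hx
      exact congrFun hb ⟨x, hx'⟩

/-- On a context inside `M₁` the second factor is summed out and contributes its total mass. -/
theorem marg_map_inl (d₁ : (M₁ → O) → ℝ) (d₂ : (M₂ → O) → ℝ) (hd₂ : ∑ g, d₂ g = 1)
    (γ : Finset M₁) (s : ↥(γ.map (inlEmb M₁ M₂)) → O) :
    marg (γ.map (inlEmb M₁ M₂)) (prodDist d₁ d₂) s = marg γ d₁ (restrL γ s) := by
  unfold marg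
  rw [← mul_one (∑ f : M₁ → O, _), ← hd₂, ← sum_sep]
  refine Finset.sum_congr rfl fun f _ => ?_
  rw [ite_zero_mul]
  refine if_congr ⟨?_, fun ha => ?_⟩ rfl rfl
  · rintro rfl
    rfl
  · funext ⟨x, hx⟩
    obtain ⟨y, hy, rfl⟩ := Finset.mem_map.1 hx
    exact congrFun ha ⟨y, hy⟩

theorem marg_map_inr (d₁ : (M₁ → O) → ℝ) (d₂ : (M₂ → O) → ℝ) (hd₁ : ∑ f, d₁ f = 1)
    (γ : Finset M₂) (s : ↥(γ.map (inrEmb M₁ M₂)) → O) :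
    marg (γ.map (inrEmb M₁ M₂)) (prodDist d₁ d₂) s = marg γ d₂ (restrR γ s) := by
  unfold marg
  rw [← one_mul (∑ f : M₂ → O, _), ← hd₁, ← sum_sep]
  refine Finset.sum_congr rfl fun f _ => ?_
  rw [mul_ite_zero]
  refine if_congr ⟨?_, fun ha => ?_⟩ rfl rfl
  · rintro rfl
    rfl
  · funext ⟨x, hx⟩
    obtain ⟨y, hy, rfl⟩ := Finset.mem_map.1 hx
    exact congrFun ha ⟨y, hy⟩

/-- The product and the controlled choice of non-contextual behaviors are
non-contextual. -/
theorem product_and_controlled_choice_noncontextual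
    (C₁ : Finset (Finset M₁)) (C₂ : Finset (Finset M₂))
    (p₁ : Fam M₁ O) (p₂ : Fam M₂ O) (p12 pcc : Fam (M₁ ⊕ M₂) O)
    (h₁ : IsBehavior C₁ p₁) (h₂ : IsBehavior C₂ p₂)
    (hnc₁ : NonContextual C₁ p₁) (hnc₂ : NonContextual C₂ p₂)
    (h12 : ∀ γ₁ ∈ C₁, ∀ γ₂ ∈ C₂, ∀ s : ↥(joinCtx γ₁ γ₂) → O,
      p12 (joinCtx γ₁ γ₂) s = p₁ γ₁ (restr1 γ₁ γ₂ s) * p₂ γ₂ (restr2 γ₁ γ₂ s))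
    (hccL : ∀ γ ∈ C₁, ∀ s, pcc (γ.map (inlEmb M₁ M₂)) s = p₁ γ (restrL γ s))
    (hccR : ∀ γ ∈ C₂, ∀ s, pcc (γ.map (inrEmb M₁ M₂)) s = p₂ γ (restrR γ s)) :
    NonContextual (prodC C₁ C₂) p12 ∧ NonContextual (ccC C₁ C₂) pcc := by
  obtain ⟨d₁, hpos₁, hsum₁, hm₁⟩ := hnc₁
  obtain ⟨d₂, hpos₂, hsum₂, hm₂⟩ := hnc₂
  have hpos : ∀ f, 0 ≤ prodDist d₁ d₂ f := fun f => mul_nonneg (hpos₁ _) (hpos₂ _)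
  have hsum : ∑ f, prodDist d₁ d₂ f = 1 := by
    simp only [prodDist, sum_sep, hsum₁, hsum₂, mul_one]
  refine ⟨⟨prodDist d₁ d₂, hpos, hsum, fun γ hγ s => ?_⟩,
    ⟨prodDist d₁ d₂, hpos, hsum, fun γ hγ s => ?_⟩⟩
  · obtain ⟨⟨γ₁, γ₂⟩, hmem, rfl⟩ := Finset.mem_image.1 hγ
    obtain ⟨hγ₁, hγ₂⟩ := Finset.mem_product.1 hmem
    rw [h12 γ₁ hγ₁ γ₂ hγ₂, marg_joinCtx, hm₁ γ₁ hγ₁, hm₂ γ₂ hγ₂]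
  · rcases Finset.mem_union.1 hγ with hL | hR
    · obtain ⟨γ', hγ', rfl⟩ := Finset.mem_image.1 hL
      rw [hccL γ' hγ', marg_map_inl d₁ d₂ hsum₂, hm₁ γ' hγ']
    · obtain ⟨γ', hγ', rfl⟩ := Finset.mem_image.1 hR
      rw [hccR γ' hγ', marg_map_inr d₁ d₂ hsum₁, hm₂ γ' hγ']
end

section
/- For every behavior B of a compatibility scenario Υ, the relative entropy of contextuality satisfies E_max(B) = 0 if and only if B is non-contextual. -/
/-!
Replacing the Kullback–Leibler divergence by the squared Hellinger distance
`∑ i, (√(p i) - √(q i))²`, which bounds it from below (`hellinger_le_DKL`), makes the problem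
continuous. Averaging over the uniform distribution on contexts, every non-contextual behavior with
global distribution `d` has worst-case divergence from `B` at least `hellingerGap C B d / #C`.
The gap is a continuous function of `d` on the compact simplex of distributions on `O^M`, so it
attains its minimum at some `d₀`, and `E_max B ≥ hellingerGap C B d₀ / #C ≥ 0`. If `E_max B = 0`,
the gap at `d₀` vanishes, which says that `d₀` is a global section for `B`. Conversely, a
non-contextual `B` is itself a competitor in the infimum, with divergence zero, so `E_max B ≤ 0`,
and the lower bound gives equality.
-/

open Finset

variable {M O : Type} [Fintype M] [DecidableEq M] [Fintype O] [DecidableEq O]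

/-- Kullback–Leibler divergence, valued in `EReal`, with the conventions
`0 · log (0 / q i) = 0` and `D_KL(p‖q) = ⊤` whenever `p i > 0 = q i` for some `i`. -/
noncomputable def DKL {α : Type} [Fintype α] (p q : α → ℝ) : EReal :=
  ∑ i, if p i = 0 then (0 : EReal) else if q i = 0 then (⊤ : EReal)
       else ((p i * Real.log (p i / q i) : ℝ) : EReal)

/-- A probability distribution on the set of contexts `C`. -/
def IsCtxDist (C : Finset (Finset M)) (π : Finset M → ℝ) : Prop :=
  (∀ γ ∈ C, 0 ≤ π γ) ∧ ∑ γ ∈ C, π γ = 1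

/-- The relative entropy of contextuality: infimum over non-contextual behaviors of the
supremum over probability distributions on contexts of the averaged KL divergence. -/
noncomputable def Emax (C : Finset (Finset M)) (p : Fam M O) : EReal :=
  ⨅ q ∈ {q : Fam M O | IsBehavior C q ∧ NonContextual C q},
    ⨆ π ∈ {π : Finset M → ℝ | IsCtxDist C π},
      ∑ γ ∈ C, (π γ : EReal) * DKL (p γ) (q γ)

/-- Each term of the divergence dominates the corresponding Hellinger term up to `a - b`, a
correction that cancels when summed over two probability distributions. This is
`log x ≤ x - 1` at `x = √(b / a)`. -/
lemma hellinger_term_le {a b : ℝ} (ha : 0 < a) (hb : 0 < b) :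
    (√a - √b) ^ 2 + (a - b) ≤ a * Real.log (a / b) := by
  have hsa := Real.sqrt_pos.2 ha
  have hsb := Real.sqrt_pos.2 hb
  have ha2 := Real.sq_sqrt ha.le
  have hb2 := Real.sq_sqrt hb.le
  have hlog : Real.log (a / b) = -(2 * Real.log (√b / √a)) := by
    rw [Real.log_div ha.ne' hb.ne', Real.log_div hsb.ne' hsa.ne',
      Real.log_sqrt ha.le, Real.log_sqrt hb.le]
    ring
  have h1 := Real.log_le_sub_one_of_pos (div_pos hsb hsa)
  have h2 : a * (√b / √a) = √a * √b := by
    nth_rewrite 1 [← ha2]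
    field_simp
  have h3 := mul_le_mul_of_nonneg_left h1 ha.le
  rw [hlog]
  nlinarith

lemma ereal_coe_sum {ι : Type*} (s : Finset ι) (f : ι → ℝ) :
    ((∑ i ∈ s, f i : ℝ) : EReal) = ∑ i ∈ s, (f i : EReal) := by
  classical
  induction s using Finset.induction_on with
  | empty => simp
  | insert a s ha ih => simp [Finset.sum_insert ha, ih]

lemma hellinger_le_DKL {α : Type} [Fintype α] {p q : α → ℝ} (hp : ∀ i, 0 ≤ p i)
    (hq : ∀ i, 0 ≤ q i) (hp1 : ∑ i, p i = 1) (hq1 : ∑ i, q i = 1) :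
    ((∑ i, (√(p i) - √(q i)) ^ 2 : ℝ) : EReal) ≤ DKL p q := by
  have h : ∑ i, (√(p i) - √(q i)) ^ 2 = ∑ i, ((√(p i) - √(q i)) ^ 2 + (p i - q i)) := by
    rw [Finset.sum_add_distrib, Finset.sum_sub_distrib, hp1, hq1]
    ring
  rw [h, ereal_coe_sum, DKL]
  refine Finset.sum_le_sum fun i _ => ?_
  split_ifs with h0 h1
  · rw [h0, Real.sqrt_zero, zero_sub, neg_sq, Real.sq_sqrt (hq i)]
    simp
  · exact le_top
  · exact EReal.coe_le_coe_iff.2 (hellinger_term_le (lt_of_le_of_ne (hp i) (Ne.symm h0))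
      (lt_of_le_of_ne (hq i) (Ne.symm h1)))

lemma DKL_self {α : Type} [Fintype α] (p : α → ℝ) : DKL p p = 0 := by
  refine Finset.sum_eq_zero fun i _ => ?_
  split_ifs with h
  · rfl
  · simp [div_self h]

/-- Total squared Hellinger distance, over the contexts in `C`, between the behavior `B` and the
marginals of the global distribution `d`. -/
noncomputable def hellingerGap (C : Finset (Finset M)) (B : Fam M O) (d : (M → O) → ℝ) : ℝ :=
  ∑ γ ∈ C, ∑ s, (√(B γ s) - √(marg γ d s)) ^ 2

lemma hellingerGap_nonneg (C : Finset (Finset M)) (B : Fam M O) (d : (M → O) → ℝ) :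
    0 ≤ hellingerGap C B d :=
  Finset.sum_nonneg fun _ _ => Finset.sum_nonneg fun _ _ => sq_nonneg _

lemma continuous_hellingerGap (C : Finset (Finset M)) (B : Fam M O) :
    Continuous (hellingerGap C B) := by
  have hm : ∀ (γ : Finset M) (s : ↥γ → O), Continuous fun d : (M → O) → ℝ => marg γ d s := by
    intro γ s
    refine continuous_finsetSum _ fun f _ => ?_
    split_ifs
    · exact continuous_apply f
    · exact continuous_const
  refine continuous_finsetSum _ fun γ _ => continuous_finsetSum _ fun s _ => ?_
  exact (continuous_const.sub (hm γ s).sqrt).pow 2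

lemma marg_nonneg (γ : Finset M) {d : (M → O) → ℝ} (hd : ∀ f, 0 ≤ d f) (s : ↥γ → O) :
    0 ≤ marg γ d s :=
  Finset.sum_nonneg fun f _ => by
    split_ifs
    · exact hd f
    · exact le_rfl

lemma nonContextual_of_hellingerGap_eq_zero {C : Finset (Finset M)} {B : Fam M O}
    (hB : IsBehavior C B) {d : (M → O) → ℝ} (hd : d ∈ stdSimplex ℝ (M → O))
    (h : hellingerGap C B d = 0) : NonContextual C B := by
  refine ⟨d, hd.1, hd.2, fun γ hγ s => ?_⟩
  have h1 := (Finset.sum_eq_zero_iff_of_nonneg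
    (fun _ _ => Finset.sum_nonneg fun _ _ => sq_nonneg _)).1 h γ hγ
  have h2 := (Finset.sum_eq_zero_iff_of_nonneg (fun _ _ => sq_nonneg _)).1 h1 s
    (Finset.mem_univ s)
  exact (Real.sqrt_inj ((hB γ hγ).1 s) (marg_nonneg γ hd.1 s)).1
    (sub_eq_zero.1 (pow_eq_zero_iff two_ne_zero |>.1 h2))

lemma le_Emax {C : Finset (Finset M)} (hC : C.Nonempty) {B : Fam M O} (hB : IsBehavior C B)
    {c : ℝ} (hc : ∀ d ∈ stdSimplex ℝ (M → O), c ≤ hellingerGap C B d) :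
    (((C.card : ℝ)⁻¹ * c : ℝ) : EReal) ≤ Emax C B := by
  have hcard : (0 : ℝ) < C.card := by exact_mod_cast hC.card_pos
  refine le_iInf₂ fun q hq => ?_
  obtain ⟨hqB, d, hd0, hd1, hdq⟩ := hq
  -- The uniform distribution on contexts turns the supremum into a sum over all of `C`.
  have hπ : IsCtxDist C (fun _ => (C.card : ℝ)⁻¹) :=
    ⟨fun _ _ => by positivity, by simp [hcard.ne']⟩
  refine le_trans ?_ (le_iSup₂ (f := fun (π : Finset M → ℝ) (_ : π ∈ {π | IsCtxDist C π}) =>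
    ∑ γ ∈ C, (π γ : EReal) * DKL (B γ) (q γ)) _ hπ)
  have h1 : (C.card : ℝ)⁻¹ * c ≤ (C.card : ℝ)⁻¹ * hellingerGap C B d :=
    mul_le_mul_of_nonneg_left (hc d ⟨hd0, hd1⟩) (by positivity)
  refine (EReal.coe_le_coe_iff.2 h1).trans ?_
  rw [hellingerGap, Finset.mul_sum, ereal_coe_sum]
  refine Finset.sum_le_sum fun γ hγ => ?_
  have h2 := hellinger_le_DKL (hB γ hγ).1 (hqB γ hγ).1 (hB γ hγ).2 (hqB γ hγ).2
  simp only [hdq γ hγ] at h2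
  rw [EReal.coe_mul]
  exact mul_le_mul_of_nonneg_left h2 (EReal.coe_nonneg.2 (by positivity))

/-- Faithfulness of the relative entropy of contextuality:
`E_max B = 0` iff `B` is non-contextual. -/
theorem emax_eq_zero_iff_noncontextual [Nonempty O]
    (C : Finset (Finset M)) (hC : C.Nonempty) (B : Fam M O) (hB : IsBehavior C B) :
    Emax C B = 0 ↔ NonContextual C B := by
  constructor
  · intro h
    classical
    obtain ⟨d, hd, hmin⟩ := (isCompact_stdSimplex ℝ (M → O)).exists_isMinOn
      ⟨_, single_mem_stdSimplex ℝ (Classical.arbitrary (M → O))⟩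
      (continuous_hellingerGap C B).continuousOn
    have h1 := le_Emax hC hB (fun e he => hmin he)
    rw [h, EReal.coe_nonpos] at h1
    have hcard : (0 : ℝ) < (C.card : ℝ)⁻¹ := inv_pos.2 (by exact_mod_cast hC.card_pos)
    exact nonContextual_of_hellingerGap_eq_zero hB hd
      (le_antisymm (nonpos_of_mul_nonpos_right h1 hcard) (hellingerGap_nonneg C B d))
  · intro h
    refine le_antisymm ?_ ?_
    · refine (iInf₂_le B ⟨hB, h⟩).trans (iSup₂_le fun π _ => ?_)
      simp [DKL_self]
    · simpa using le_Emax hC hB (fun d _ => hellingerGap_nonneg C B d)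
end

section
/- The relative entropy of contextuality is convex: if B¹, …, Bᵏ are behaviors for the same compatibility scenario Υ and π₁, …, π_k are nonnegative reals with Σ_i π_i = 1, then E_max(Σ_i π_i B^i) ≤ Σ_i π_i E_max(B^i), where Σ_i π_i B^i is the behavior with distributions Σ_i π_i p^i_γ for each context γ. -/
/-!
The proof rests on the log-sum inequality, here `klTerm_sum_le`: the extended-valued integrand
`a log (a / b)` of the Kullback–Leibler divergence is sublinear in the pair `(a, b)`. Applied
outcome by outcome it gives joint convexity of `DKL` (`DKL_sum_le`); applied with unit weights to
the entries of two distributions it gives nonnegativity of `DKL` (`DKL_nonneg`).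

Fix a non-contextual `q i` for each `B i`. The mixture `∑ i, π i * q i` is again non-contextual
(mix the global sections), and joint convexity, averaged over a distribution on the contexts,
bounds the worst-case divergence of the mixtures by the `π`-average of the worst-case divergences
(`worst_mix_le`). Choosing each `q i` nearly optimal and letting the error tend to zero yields
convexity.

Two degenerate cases are separate because of `EReal` arithmetic. Without any non-contextual
behavior every `Emax` is `⊤`. With no contexts there is no distribution on them, so every
supremum is `⊥`. Otherwise `Emax` is nonnegative and `⊥` never occurs.
-/


open Finset

variable {M O : Type} [Fintype M] [DecidableEq M] [Fintype O] [DecidableEq O]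

/-- Multiplication by a nonnegative real distributes over sums, even when `⊤` or `⊥` occur. -/
lemma ereal_mul_sum {ι : Type*} (s : Finset ι) {c : ℝ} (hc : 0 ≤ c) (f : ι → EReal) :
    (c : EReal) * ∑ i ∈ s, f i = ∑ i ∈ s, (c : EReal) * f i := by
  classical
  induction s using Finset.induction_on with
  | empty => simp
  | insert a s ha ih =>
    rw [Finset.sum_insert ha, Finset.sum_insert ha,
      EReal.left_distrib_of_nonneg_of_ne_top (by exact_mod_cast hc) (EReal.coe_ne_top c), ih]

lemma ereal_sum_ne_bot {ι : Type*} (s : Finset ι) (f : ι → EReal) (h : ∀ i ∈ s, f i ≠ ⊥) :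
    ∑ i ∈ s, f i ≠ ⊥ := by
  classical
  induction s using Finset.induction_on with
  | empty => simp
  | insert a s ha ih =>
    rw [Finset.sum_insert ha, EReal.add_ne_bot_iff]
    exact ⟨h a (by simp), ih fun i hi => h i (by simp [hi])⟩

lemma ereal_sum_eq_top {ι : Type*} (s : Finset ι) (f : ι → EReal) (h : ∀ i ∈ s, f i ≠ ⊥)
    {j : ι} (hj : j ∈ s) (hfj : f j = ⊤) : ∑ i ∈ s, f i = ⊤ := by
  classical
  rw [← Finset.add_sum_erase s f hj, hfj]
  exact EReal.top_add_of_ne_bot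
    (ereal_sum_ne_bot _ _ fun i hi => h i (Finset.mem_of_mem_erase hi))

lemma ereal_mul_ne_bot {c : ℝ} (hc : 0 ≤ c) {x : EReal} (hx : x ≠ ⊥) : (c : EReal) * x ≠ ⊥ := by
  rcases hc.eq_or_lt with rfl | hc
  · simp
  · induction x with
    | bot => exact absurd rfl hx
    | top => simp [EReal.coe_mul_top_of_pos hc]
    | coe x => exact_mod_cast EReal.coe_ne_bot (c * x)

lemma ereal_mul_le_mul {c : ℝ} (hc : 0 ≤ c) {x y : EReal} (h : x ≤ y) :
    (c : EReal) * x ≤ (c : EReal) * y :=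
  mul_le_mul_of_nonneg_left h (by exact_mod_cast hc)

/-! ### The log-sum inequality and the Kullback–Leibler divergence -/

/-- The integrand `a log (a / b)` of the Kullback–Leibler divergence, with the conventions
`0 log (0 / b) = 0` and `a log (a / 0) = ⊤` for `a ≠ 0`. -/
noncomputable def klTerm (a b : ℝ) : EReal :=
  if a = 0 then (0 : EReal) else if b = 0 then (⊤ : EReal)
    else ((a * Real.log (a / b) : ℝ) : EReal)

lemma DKL_eq_sum_klTerm {α : Type} [Fintype α] (p q : α → ℝ) :
    DKL p q = ∑ i, klTerm (p i) (q i) := rfl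

lemma klTerm_ne_bot (a b : ℝ) : klTerm a b ≠ ⊥ := by
  unfold klTerm
  split_ifs
  · simp
  · simp
  · exact EReal.coe_ne_bot _

lemma klTerm_eq_coe {a b : ℝ} (h : b = 0 → a = 0) :
    klTerm a b = ((a * Real.log (a / b) : ℝ) : EReal) := by
  unfold klTerm
  split_ifs with h1 h2
  · simp [h1]
  · exact absurd (h h2) h1
  · rfl

/-- Weighted log-sum inequality for real-valued integrands. Each summand dominates the tangent
plane of `(a, b) ↦ a log (a / b)` at `(P, Q)`, where `P` and `Q` are the two weighted sums. -/
lemma real_log_sum {ι : Type*} (s : Finset ι) (w p q : ι → ℝ) (hw : ∀ i ∈ s, 0 ≤ w i)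
    (hp : ∀ i ∈ s, 0 ≤ p i) (hq : ∀ i ∈ s, 0 ≤ q i) (hpq : ∀ i ∈ s, 0 < w i → q i = 0 → p i = 0)
    (hP : 0 < ∑ i ∈ s, w i * p i) (hQ : 0 < ∑ i ∈ s, w i * q i) :
    (∑ i ∈ s, w i * p i) * Real.log ((∑ i ∈ s, w i * p i) / ∑ i ∈ s, w i * q i)
      ≤ ∑ i ∈ s, w i * (p i * Real.log (p i / q i)) := by
  set P := ∑ i ∈ s, w i * p i with hPdef
  set Q := ∑ i ∈ s, w i * q i with hQdef
  have key : ∀ i ∈ s, w i * p i * Real.log (P / Q) + w i * p i - w i * q i * (P / Q)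
      ≤ w i * (p i * Real.log (p i / q i)) := by
    intro i hi
    rcases (hw i hi).eq_or_lt with h0 | hwi
    · simp [← h0]
    rcases (hp i hi).eq_or_lt with h0 | hpi
    · simp only [← h0]
      have : 0 ≤ w i * q i * (P / Q) :=
        mul_nonneg (mul_nonneg hwi.le (hq i hi)) (div_pos hP hQ).le
      simpa using this
    have hqi : 0 < q i := lt_of_le_of_ne (hq i hi) fun h => hpi.ne' (hpq i hi hwi h.symm)
    have h1 := Real.one_sub_inv_le_log_of_pos (div_pos (div_pos hpi hqi) (div_pos hP hQ))
    rw [Real.log_div (div_pos hpi hqi).ne' (div_pos hP hQ).ne'] at h1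
    have h2 := mul_le_mul_of_nonneg_left h1 (mul_pos hwi hpi).le
    have h3 : w i * p i * (p i / q i / (P / Q))⁻¹ = w i * q i * (P / Q) := by
      field_simp
    nlinarith [h2, h3]
  calc P * Real.log (P / Q)
      = P * Real.log (P / Q) + P - Q * (P / Q) := by
        rw [mul_div_cancel₀ P hQ.ne']; ring
    _ = ∑ i ∈ s, (w i * p i * Real.log (P / Q) + w i * p i - w i * q i * (P / Q)) := by
        rw [Finset.sum_sub_distrib, Finset.sum_add_distrib, ← Finset.sum_mul, ← Finset.sum_mul]
    _ ≤ _ := Finset.sum_le_sum key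

/-- The weighted log-sum inequality, including the infinite cases. -/
lemma klTerm_sum_le {ι : Type*} (s : Finset ι) (w p q : ι → ℝ) (hw : ∀ i ∈ s, 0 ≤ w i)
    (hp : ∀ i ∈ s, 0 ≤ p i) (hq : ∀ i ∈ s, 0 ≤ q i) :
    klTerm (∑ i ∈ s, w i * p i) (∑ i ∈ s, w i * q i)
      ≤ ∑ i ∈ s, (w i : EReal) * klTerm (p i) (q i) := by
  by_cases hpq : ∀ i ∈ s, 0 < w i → q i = 0 → p i = 0
  · have hR : ∑ i ∈ s, (w i : EReal) * klTerm (p i) (q i)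
        = ((∑ i ∈ s, w i * (p i * Real.log (p i / q i)) : ℝ) : EReal) := by
      rw [ereal_coe_sum]
      refine Finset.sum_congr rfl fun i hi => ?_
      rcases (hw i hi).eq_or_lt with h0 | hwi
      · simp [← h0]
      · rw [klTerm_eq_coe (hpq i hi hwi), ← EReal.coe_mul]
    have hwp : ∀ i ∈ s, 0 ≤ w i * p i := fun i hi => mul_nonneg (hw i hi) (hp i hi)
    have hwq : ∀ i ∈ s, 0 ≤ w i * q i := fun i hi => mul_nonneg (hw i hi) (hq i hi)
    rw [hR]
    rcases (Finset.sum_nonneg hwp).eq_or_lt with hP | hP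
    · have h0 := (Finset.sum_eq_zero_iff_of_nonneg hwp).1 hP.symm
      have hz : ∑ i ∈ s, w i * (p i * Real.log (p i / q i)) = 0 :=
        Finset.sum_eq_zero fun i hi => by rw [← mul_assoc, h0 i hi, zero_mul]
      rw [← hP, hz]
      simp [klTerm]
    · have hQ : 0 < ∑ i ∈ s, w i * q i := by
        obtain ⟨i, hi, hpi⟩ := Finset.exists_ne_zero_of_sum_ne_zero hP.ne'
        have hwi : 0 < w i := lt_of_le_of_ne (hw i hi) (left_ne_zero_of_mul hpi).symm
        have hqi : 0 < q i := lt_of_le_of_ne (hq i hi) fun h =>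
          right_ne_zero_of_mul hpi (hpq i hi hwi h.symm)
        exact Finset.sum_pos' hwq ⟨i, hi, mul_pos hwi hqi⟩
      rw [klTerm_eq_coe fun h => absurd h hQ.ne', EReal.coe_le_coe_iff]
      exact real_log_sum s w p q hw hp hq hpq hP hQ
  · push Not at hpq
    obtain ⟨j, hj, hwj, hqj, hpj⟩ := hpq
    rw [ereal_sum_eq_top s _ (fun i hi => ereal_mul_ne_bot (hw i hi) (klTerm_ne_bot _ _)) hj]
    · exact le_top
    · simp [klTerm, hpj, hqj, EReal.coe_mul_top_of_pos hwj]

/-- Gibbs' inequality: the log-sum inequality with unit weights. -/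
lemma DKL_nonneg {α : Type} [Fintype α] (p q : α → ℝ) (hp : ∀ i, 0 ≤ p i) (hq : ∀ i, 0 ≤ q i)
    (hp1 : ∑ i, p i = 1) (hq1 : ∑ i, q i = 1) : 0 ≤ DKL p q := by
  have h := klTerm_sum_le Finset.univ (fun _ => (1 : ℝ)) p q (by simp) (fun i _ => hp i)
    fun i _ => hq i
  simp only [one_mul, hp1, hq1, EReal.coe_one] at h
  simpa [klTerm, DKL_eq_sum_klTerm] using h

/-- Joint convexity of the Kullback–Leibler divergence. -/
lemma DKL_sum_le {α ι : Type} [Fintype α] [Fintype ι] (w : ι → ℝ) (p q : ι → α → ℝ)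
    (hw : ∀ i, 0 ≤ w i) (hp : ∀ i s, 0 ≤ p i s) (hq : ∀ i s, 0 ≤ q i s) :
    DKL (fun s => ∑ i, w i * p i s) (fun s => ∑ i, w i * q i s)
      ≤ ∑ i, (w i : EReal) * DKL (p i) (q i) := by
  simp only [DKL_eq_sum_klTerm, ereal_mul_sum _ (hw _)]
  rw [Finset.sum_comm]
  exact Finset.sum_le_sum fun s _ =>
    klTerm_sum_le Finset.univ w (fun i => p i s) (fun i => q i s) (fun i _ => hw i)
      (fun i _ => hp i s) fun i _ => hq i s

/-! ### Mixtures of behaviors -/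

/-- The worst-case average divergence of `p` from `q` over distributions on the contexts; this is
the quantity minimized over `q` in `Emax`. -/
noncomputable def worst (C : Finset (Finset M)) (p q : Fam M O) : EReal :=
  ⨆ π ∈ {π : Finset M → ℝ | IsCtxDist C π}, ∑ γ ∈ C, (π γ : EReal) * DKL (p γ) (q γ)

lemma Emax_eq (C : Finset (Finset M)) (p : Fam M O) :
    Emax C p = ⨅ q ∈ {q : Fam M O | IsBehavior C q ∧ NonContextual C q}, worst C p q := rfl

lemma IsBehavior.mix {C : Finset (Finset M)} {k : ℕ} {q : Fin k → Fam M O} {π : Fin k → ℝ}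
    (hq : ∀ i, IsBehavior C (q i)) (hπ0 : ∀ i, 0 ≤ π i) (hπ1 : ∑ i, π i = 1) :
    IsBehavior C (fun γ s => ∑ i, π i * q i γ s) := by
  intro γ hγ
  refine ⟨fun s => Finset.sum_nonneg fun i _ => mul_nonneg (hπ0 i) ((hq i γ hγ).1 s), ?_⟩
  rw [Finset.sum_comm]
  simp only [← Finset.mul_sum, (hq _ γ hγ).2, mul_one, hπ1]

lemma NonContextual.mix {C : Finset (Finset M)} {k : ℕ} {q : Fin k → Fam M O} {π : Fin k → ℝ}
    (hq : ∀ i, NonContextual C (q i)) (hπ0 : ∀ i, 0 ≤ π i) (hπ1 : ∑ i, π i = 1) :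
    NonContextual C (fun γ s => ∑ i, π i * q i γ s) := by
  choose d hd0 hd1 hd using hq
  refine ⟨fun f => ∑ i, π i * d i f,
    fun f => Finset.sum_nonneg fun i _ => mul_nonneg (hπ0 i) (hd0 i f), ?_, ?_⟩
  · rw [Finset.sum_comm]
    simp only [← Finset.mul_sum, hd1, mul_one, hπ1]
  · intro γ hγ s
    simp only [hd _ γ hγ s, marg, Finset.mul_sum]
    rw [Finset.sum_comm]
    refine Finset.sum_congr rfl fun f _ => ?_
    split_ifs <;> simp

lemma worst_mix_le {C : Finset (Finset M)} {k : ℕ} {p q : Fin k → Fam M O} {π : Fin k → ℝ}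
    (hp : ∀ i, IsBehavior C (p i)) (hq : ∀ i, IsBehavior C (q i)) (hπ0 : ∀ i, 0 ≤ π i) :
    worst C (fun γ s => ∑ i, π i * p i γ s) (fun γ s => ∑ i, π i * q i γ s)
      ≤ ∑ i, (π i : EReal) * worst C (p i) (q i) := by
  refine iSup₂_le fun ρ hρ => ?_
  calc ∑ γ ∈ C, (ρ γ : EReal) *
        DKL (fun s => ∑ i, π i * p i γ s) (fun s => ∑ i, π i * q i γ s)
      ≤ ∑ γ ∈ C, (ρ γ : EReal) * ∑ i, (π i : EReal) * DKL (p i γ) (q i γ) :=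
        Finset.sum_le_sum fun γ hγ => ereal_mul_le_mul (hρ.1 γ hγ)
          (DKL_sum_le π (fun i => p i γ) (fun i => q i γ) hπ0
            (fun i => (hp i γ hγ).1) fun i => (hq i γ hγ).1)
    _ = ∑ γ ∈ C, ∑ i, (π i : EReal) * ((ρ γ : EReal) * DKL (p i γ) (q i γ)) :=
        Finset.sum_congr rfl fun γ hγ => by
          rw [ereal_mul_sum _ (hρ.1 γ hγ)]
          exact Finset.sum_congr rfl fun i _ => mul_left_comm _ _ _
    _ = ∑ i, (π i : EReal) * ∑ γ ∈ C, (ρ γ : EReal) * DKL (p i γ) (q i γ) := by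
        rw [Finset.sum_comm]
        simp only [ereal_mul_sum _ (hπ0 _)]
    _ ≤ ∑ i, (π i : EReal) * worst C (p i) (q i) :=
        Finset.sum_le_sum fun i _ => ereal_mul_le_mul (hπ0 i)
          (le_iSup₂_of_le (f := fun (π : Finset M → ℝ) (_ : π ∈ {π | IsCtxDist C π}) =>
            ∑ γ ∈ C, (π γ : EReal) * DKL (p i γ) (q i γ)) ρ hρ le_rfl)

/-- A point mass on any context already gives a nonnegative average divergence. -/
lemma worst_nonneg {C : Finset (Finset M)} (hC : C.Nonempty) {p q : Fam M O}
    (hp : IsBehavior C p) (hq : IsBehavior C q) : 0 ≤ worst C p q := by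
  obtain ⟨γ₀, hγ₀⟩ := hC
  have hδ : IsCtxDist C (fun γ => if γ = γ₀ then (1 : ℝ) else 0) :=
    ⟨fun γ _ => by dsimp only; split_ifs <;> norm_num, by simp [hγ₀]⟩
  refine le_iSup₂_of_le (f := fun (π : Finset M → ℝ) (_ : π ∈ {π | IsCtxDist C π}) =>
    ∑ γ ∈ C, (π γ : EReal) * DKL (p γ) (q γ)) _ hδ (Finset.sum_nonneg fun γ hγ => ?_)
  refine mul_nonneg (EReal.coe_nonneg.2 (hδ.1 γ hγ)) ?_
  exact DKL_nonneg _ _ (hp γ hγ).1 (hq γ hγ).1 (hp γ hγ).2 (hq γ hγ).2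

/-- Convexity of the relative entropy of contextuality. -/
theorem emax_convex (C : Finset (Finset M)) (k : ℕ) (B : Fin k → Fam M O) (π : Fin k → ℝ)
    (hB : ∀ i, IsBehavior C (B i)) (hπ0 : ∀ i, 0 ≤ π i) (hπ1 : ∑ i, π i = 1) :
    Emax C (fun γ s => ∑ i, π i * B i γ s) ≤ ∑ i, ((π i : ℝ) : EReal) * Emax C (B i) := by
  by_cases hne : ∃ q₀ : Fam M O, IsBehavior C q₀ ∧ NonContextual C q₀
  swap
  · -- every infimum is over the empty set, and some weight is positive
    have htop : ∀ p : Fam M O, Emax C p = ⊤ := fun p => by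
      rw [Emax_eq]
      exact iInf₂_eq_top.2 fun q hq => absurd ⟨q, hq⟩ hne
    obtain ⟨j, -, hj⟩ := Finset.exists_ne_zero_of_sum_ne_zero (hπ1.trans_ne one_ne_zero)
    have hj : 0 < π j := lt_of_le_of_ne (hπ0 j) hj.symm
    rw [ereal_sum_eq_top Finset.univ _ _ (Finset.mem_univ j)]
    · exact le_top
    · rw [htop, EReal.coe_mul_top_of_pos hj]
    · exact fun i _ => ereal_mul_ne_bot (hπ0 i) (by simp [htop])
  obtain ⟨q₀, hq₀⟩ := hne
  rcases C.eq_empty_or_nonempty with rfl | hC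
  · -- no distribution on the empty set of contexts exists, so the left-hand side is `⊥`
    have hbot : Emax ∅ (fun γ s => ∑ i, π i * B i γ s) ≤ ⊥ := by
      rw [Emax_eq]
      refine iInf₂_le_of_le q₀ hq₀ (iSup₂_le fun ρ hρ => ?_)
      exact absurd hρ.2 (by simp)
    exact hbot.trans bot_le
  have hnonneg : ∀ i, 0 ≤ Emax C (B i) := fun i => by
    rw [Emax_eq]
    exact le_iInf₂ fun q hq => worst_nonneg hC (hB i) hq.1
  have hnb : ∀ i, Emax C (B i) ≠ ⊥ := fun i h => by
    have := hnonneg i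
    simp [h] at this
  by_cases hfin : ∀ i, 0 < π i → Emax C (B i) ≠ ⊤
  swap
  · push Not at hfin
    obtain ⟨j, hj, hjt⟩ := hfin
    rw [ereal_sum_eq_top Finset.univ _ (fun i _ => ereal_mul_ne_bot (hπ0 i) (hnb i))
      (Finset.mem_univ j)]
    · exact le_top
    · rw [hjt, EReal.coe_mul_top_of_pos hj]
  set r : Fin k → ℝ := fun i => (Emax C (B i)).toReal with hr
  have hsum : ∑ i, ((π i : ℝ) : EReal) * Emax C (B i) = ((∑ i, π i * r i : ℝ) : EReal) := by
    rw [ereal_coe_sum]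
    refine Finset.sum_congr rfl fun i _ => ?_
    rcases (hπ0 i).eq_or_lt with h0 | hi
    · simp [← h0]
    · rw [EReal.coe_mul, hr, EReal.coe_toReal (hfin i hi) (hnb i)]
  rw [hsum]
  refine EReal.le_of_forall_lt_iff_le.1 fun z hz => ?_
  rw [EReal.coe_lt_coe_iff] at hz
  -- indices of weight zero may have infinite `Emax`; any non-contextual behavior serves there
  have hex : ∀ i, ∃ q : Fam M O, (IsBehavior C q ∧ NonContextual C q) ∧
      (0 < π i → worst C (B i) q ≤ ((r i + (z - ∑ i, π i * r i) : ℝ) : EReal)) := by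
    intro i
    by_cases hi : 0 < π i
    · have hlt : Emax C (B i) < ((r i + (z - ∑ i, π i * r i) : ℝ) : EReal) := by
        rw [← EReal.coe_toReal (hfin i hi) (hnb i), EReal.coe_lt_coe_iff]
        change r i < _
        linarith
      simp only [Emax_eq, iInf_lt_iff] at hlt
      obtain ⟨q, hq, hlt⟩ := hlt
      exact ⟨q, hq, fun _ => hlt.le⟩
    · exact ⟨q₀, hq₀, fun h => absurd h hi⟩
  choose q hq hqle using hex
  calc Emax C (fun γ s => ∑ i, π i * B i γ s)
      ≤ worst C (fun γ s => ∑ i, π i * B i γ s) (fun γ s => ∑ i, π i * q i γ s) := by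
        rw [Emax_eq]
        exact iInf₂_le _ ⟨IsBehavior.mix (fun i => (hq i).1) hπ0 hπ1,
          NonContextual.mix (fun i => (hq i).2) hπ0 hπ1⟩
    _ ≤ ∑ i, (π i : EReal) * worst C (B i) (q i) := worst_mix_le hB (fun i => (hq i).1) hπ0
    _ ≤ ∑ i, ((π i * (r i + (z - ∑ i, π i * r i)) : ℝ) : EReal) := by
        refine Finset.sum_le_sum fun i _ => ?_
        rcases (hπ0 i).eq_or_lt with h0 | hi
        · simp [← h0]
        · rw [EReal.coe_mul]
          exact ereal_mul_le_mul hi.le (hqle i hi)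
    _ = (z : EReal) := by
        rw [← ereal_coe_sum]
        simp only [mul_add, Finset.sum_add_distrib, ← Finset.sum_mul, hπ1, one_mul,
          add_sub_cancel]
end

section
/- Non-contextual measurement-wise post-processing preserves non-contextuality: if B is a non-contextual behavior on a compatibility scenario Υ and B' is obtained from B by a non-contextual measurement-wise post-processing, then B' is a non-contextual behavior on Υ. -/
/-!
If `d` is a global section of `p`, applying the stochastic matrices to all measurements at once
gives a global section of the post-processed behavior:
`d' g = ∑ φ, μ φ * ∑ f, (∏ x, q x φ (g x) (f x)) * d f`.
Its marginal on a context `γ` is the required one because marginalizing a product distribution on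
`O^M` drops the factors outside `γ` (`sum_restrict_prod`, where each such factor sums to `1`),
while averaging a function of `s` against the marginal of `d` is averaging its pullback along
restriction against `d` (`sum_mul_marg`).
-/

open Finset

variable {M O : Type} [Fintype M] [DecidableEq M] [Fintype O] [DecidableEq O]

/-- Non-contextual measurement-wise post-processing of a behavior: shared randomness
`μ` on `Φ` and stochastic matrices `q x φ` with `q x φ t s = q_x^φ(t|s)`, giving
`p' γ t = ∑ φ, μ φ ∑ s (∏_{x ∈ γ} q_x^φ(t x | s x)) p γ s`. -/
noncomputable def postProc {Φ : Type} [Fintype Φ] (μ : Φ → ℝ) (q : M → Φ → O → O → ℝ)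
    (p : Fam M O) : Fam M O :=
  fun γ t => ∑ φ, μ φ * ∑ s : ↥γ → O, (∏ x : ↥γ, q x.1 φ (t x) (s x)) * p γ s

/-- The marginal on `γ` of a product of normalized weights is the product over `γ`. -/
lemma sum_restrict_prod (γ : Finset M) (w : M → O → ℝ) (hw : ∀ x, ∑ o, w x o = 1)
    (t : ↥γ → O) :
    (∑ g : M → O, if (fun x : ↥γ => g x.1) = t then ∏ x, w x (g x) else 0)
      = ∏ x : ↥γ, w x.1 (t x) := by
  -- The constraint `g|γ = t` is absorbed into the factors, so that the sum is again of product form.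
  let v : M → O → ℝ := fun x o =>
    if h : x ∈ γ then (if o = t ⟨x, h⟩ then w x o else 0) else w x o
  have h1 : ∀ g : M → O,
      (if (fun x : ↥γ => g x.1) = t then ∏ x, w x (g x) else 0) = ∏ x, v x (g x) := by
    intro g
    split_ifs with h
    · refine Finset.prod_congr rfl fun x _ => ?_
      by_cases hx : x ∈ γ
      · have : g x = t ⟨x, hx⟩ := congrFun h ⟨x, hx⟩
        simp [v, hx, this]
      · simp [v, hx]
    · obtain ⟨x, hx⟩ := Function.ne_iff.mp h
      refine (Finset.prod_eq_zero (Finset.mem_univ x.1) ?_).symm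
      simp [v, hx]
  have h2 : ∀ x, ∑ o, v x o = if h : x ∈ γ then w x (t ⟨x, h⟩) else 1 := by
    intro x
    by_cases hx : x ∈ γ
    · simp [v, hx]
    · simp [v, hx, hw]
  simp_rw [h1]
  rw [← Fintype.prod_sum v]
  simp_rw [h2]
  rw [← Finset.prod_subset (Finset.subset_univ γ) (fun x _ hx => by simp [hx]),
    ← Finset.prod_coe_sort γ]
  exact Finset.prod_congr rfl fun x _ => by simp

lemma sum_mul_marg (γ : Finset M) (d : (M → O) → ℝ) (a : (↥γ → O) → ℝ) :
    ∑ s, a s * marg γ d s = ∑ f : M → O, a (fun x => f x.1) * d f := by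
  simp_rw [marg, Finset.mul_sum]
  rw [Finset.sum_comm]
  simp

/-- Non-contextual measurement-wise post-processing preserves non-contextuality. -/
theorem postProc_preserves_noncontextual
    {Φ : Type} [Fintype Φ] (μ : Φ → ℝ) (hμ0 : ∀ φ, 0 ≤ μ φ) (hμ1 : ∑ φ, μ φ = 1)
    (q : M → Φ → O → O → ℝ) (hq0 : ∀ x φ t s, 0 ≤ q x φ t s)
    (hq1 : ∀ x φ s, ∑ t, q x φ t s = 1)
    (C : Finset (Finset M)) (p : Fam M O) (hp : IsBehavior C p)
    (hnc : NonContextual C p) :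
    NonContextual C (postProc μ q p) := by
  obtain ⟨d, hd0, hd1, hd⟩ := hnc
  refine ⟨fun g => ∑ φ, μ φ * ∑ f : M → O, (∏ x, q x φ (g x) (f x)) * d f, ?_, ?_, ?_⟩
  · exact fun g => Finset.sum_nonneg fun φ _ => mul_nonneg (hμ0 φ) <|
      Finset.sum_nonneg fun f _ => mul_nonneg (Finset.prod_nonneg fun x _ => hq0 _ _ _ _) (hd0 f)
  · rw [Finset.sum_comm]
    simp_rw [← Finset.mul_sum]
    rw [← hμ1]
    refine Finset.sum_congr rfl fun φ _ => ?_
    rw [Finset.sum_comm]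
    simp_rw [← Finset.sum_mul]
    have h : ∀ f : M → O, ∑ g : M → O, ∏ x, q x φ (g x) (f x) = 1 := by
      intro f
      rw [← Fintype.prod_sum (fun x o => q x φ o (f x))]
      simp [hq1]
    simp [h, hd1]
  · intro γ hγ t
    have h : ∀ φ, ∑ s : ↥γ → O, (∏ x : ↥γ, q x.1 φ (t x) (s x)) * p γ s
        = ∑ f : M → O, ∑ g : M → O, if (fun x : ↥γ => g x.1) = t then
            (∏ x, q x φ (g x) (f x)) * d f else 0 := by
      intro φ
      simp_rw [hd γ hγ]
      rw [sum_mul_marg]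
      refine Finset.sum_congr rfl fun f _ => ?_
      rw [← sum_restrict_prod γ (fun x o => q x φ o (f x)) (fun x => hq1 x φ (f x)) t,
        Finset.sum_mul]
      simp_rw [ite_mul, zero_mul]
    simp only [postProc, h, marg]
    simp_rw [← Finset.sum_filter]
    rw [Finset.sum_comm]
    refine Finset.sum_congr rfl fun φ _ => ?_
    rw [← Finset.mul_sum, Finset.sum_comm]
end

section
/- The uniform relative entropy of contextuality is monotone under non-contextual measurement-wise post-processing: if B' is obtained from a behavior B on a compatibility scenario Υ by a non-contextual measurement-wise post-processing, then E_u(B') ≤ E_u(B). -/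
/-!
Post-processing acts on each context `γ` by one stochastic matrix `ctxKernel μ q γ`, the
`μ`-mixture of the product matrices `∏ x ∈ γ, q x φ`. Two facts give the theorem.

* The data-processing inequality `DKL_kernel_le`: a stochastic matrix does not increase the
  relative entropy. It is the log-sum inequality `log_sum_le` applied to every row of the matrix.
* Post-processing preserves non-contextuality (`nonContextual_postProc`): if `d` is a global
  section of `r`, then the image of `d` under the matrix built in the same way from all of `M`
  is a global section of the post-processed `r`, because marginalizing the product over `M`
  onto `γ` leaves the product over `γ` (`sum_globKernel`).

So each non-contextual candidate in the infimum for `p` yields one, at least as good, in the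
infimum for the post-processed `p`.
-/

open Finset

variable {M O : Type} [Fintype M] [DecidableEq M] [Fintype O] [DecidableEq O]

/-- The uniform relative entropy of contextuality. -/
noncomputable def Eu (C : Finset (Finset M)) (p : Fam M O) : EReal :=
  (((C.card : ℝ)⁻¹ : ℝ) : EReal) *
    ⨅ q ∈ {q : Fam M O | IsBehavior C q ∧ NonContextual C q},
      ∑ γ ∈ C, DKL (p γ) (q γ)

/-! ### Relative entropy and the data-processing inequality -/

/-- The log-sum inequality, for `a` absolutely continuous with respect to `b`. -/
lemma log_sum_le {α : Type} [Fintype α] (a b : α → ℝ) (ha : ∀ i, 0 ≤ a i) (hb : ∀ i, 0 ≤ b i)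
    (hab : ∀ i, b i = 0 → a i = 0) :
    (∑ i, a i) * Real.log ((∑ i, a i) / ∑ i, b i) ≤ ∑ i, a i * Real.log (a i / b i) := by
  rcases (sum_nonneg fun i _ => ha i : 0 ≤ ∑ i, a i).eq_or_lt with hA | hA
  · have h0 : ∀ i, a i = 0 := fun i =>
      (sum_eq_zero_iff_of_nonneg fun i _ => ha i).1 hA.symm i (mem_univ i)
    simp [h0]
  have hB : 0 < ∑ i, b i := by
    refine (sum_nonneg fun i _ => hb i).lt_of_ne fun h => hA.ne ?_
    have h0 := (sum_eq_zero_iff_of_nonneg fun i _ => hb i).1 h.symm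
    exact (sum_eq_zero fun i hi => hab i (h0 i hi)).symm
  set A := ∑ i, a i with hAdef
  set B := ∑ i, b i with hBdef
  -- Termwise `log x ≥ 1 - x⁻¹` at `x = (a i / b i) / (A / B)`; the corrections sum to `A - A`.
  have key : ∀ i, a i * Real.log (A / B) + (a i - b i * (A / B)) ≤ a i * Real.log (a i / b i) := by
    intro i
    rcases (ha i).eq_or_lt with h | h
    · rw [← h]
      have : 0 ≤ b i * (A / B) := mul_nonneg (hb i) (by positivity)
      simpa using this
    · have hbi : 0 < b i := (hb i).lt_of_ne fun h' => h.ne' (hab i h'.symm)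
      have h1 := Real.one_sub_inv_le_log_of_pos (x := (a i / b i) / (A / B)) (by positivity)
      rw [Real.log_div (by positivity) (by positivity)] at h1
      have h2 := mul_le_mul_of_nonneg_left h1 h.le
      have h3 : a i * (1 - ((a i / b i) / (A / B))⁻¹) = a i - b i * (A / B) := by
        field_simp
      rw [h3] at h2
      linarith
  have h := sum_le_sum fun i (_ : i ∈ univ) => key i
  rw [sum_add_distrib, sum_sub_distrib, ← sum_mul, ← sum_mul, ← hAdef, ← hBdef,
    mul_div_cancel₀ _ hB.ne', sub_self, add_zero] at h
  exact h

/-- Under absolute continuity the divergence is a real number; the junk values of `log` and `/`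
are harmless, since they are multiplied by `p i = 0`. -/
lemma DKL_eq_coe {α : Type} [Fintype α] (p q : α → ℝ) (h : ∀ i, q i = 0 → p i = 0) :
    DKL p q = ((∑ i, p i * Real.log (p i / q i) : ℝ) : EReal) := by
  classical
  have hs : ∀ (s : Finset α) (f : α → ℝ), ((∑ i ∈ s, f i : ℝ) : EReal) = ∑ i ∈ s, (f i : EReal) := by
    intro s f
    induction s using Finset.induction_on with
    | empty => simp
    | insert a s ha ih => rw [sum_insert ha, sum_insert ha, EReal.coe_add, ih]
  rw [hs, DKL]
  refine sum_congr rfl fun i _ => ?_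
  by_cases hp : p i = 0
  · simp [hp]
  · rw [if_neg hp, if_neg fun hq => hp (h i hq)]

lemma DKL_eq_top {α : Type} [Fintype α] (p q : α → ℝ) (i : α) (hq : q i = 0) (hp : p i ≠ 0) :
    DKL p q = ⊤ := by
  classical
  rw [DKL, ← add_sum_erase univ _ (mem_univ i), if_neg hp, if_pos hq]
  -- No summand is `⊥`, so the value `⊤` of the summand at `i` is not absorbed.
  refine EReal.top_add_of_ne_bot ?_
  refine Finset.sum_induction _ (fun x : EReal => x ≠ ⊥)
    (fun a b ha hb => EReal.add_ne_bot_iff.2 ⟨ha, hb⟩) EReal.zero_ne_bot fun j _ => ?_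
  split_ifs
  · exact EReal.zero_ne_bot
  · exact top_ne_bot
  · exact EReal.coe_ne_bot _

/-- The data-processing inequality for a stochastic matrix `K`. -/
lemma DKL_kernel_le {α β : Type} [Fintype α] [Fintype β] (K : β → α → ℝ)
    (hK0 : ∀ t s, 0 ≤ K t s) (hK1 : ∀ s, ∑ t, K t s = 1) (p q : α → ℝ)
    (hp : ∀ s, 0 ≤ p s) (hq : ∀ s, 0 ≤ q s) :
    DKL (fun t => ∑ s, K t s * p s) (fun t => ∑ s, K t s * q s) ≤ DKL p q := by
  by_cases hac : ∀ i, q i = 0 → p i = 0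
  swap
  · push Not at hac
    obtain ⟨i, hqi, hpi⟩ := hac
    rw [DKL_eq_top p q i hqi hpi]
    exact le_top
  have hac' : ∀ t s, K t s * q s = 0 → K t s * p s = 0 := fun t s h => by
    rcases mul_eq_zero.1 h with h | h
    · simp [h]
    · simp [hac s h]
  rw [DKL_eq_coe p q hac, DKL_eq_coe]
  swap
  · intro t ht
    have h0 := (sum_eq_zero_iff_of_nonneg fun s _ => mul_nonneg (hK0 t s) (hq s)).1 ht
    exact sum_eq_zero fun s hs => hac' t s (h0 s hs)
  rw [EReal.coe_le_coe_iff]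
  calc _ ≤ ∑ t, ∑ s, K t s * p s * Real.log (K t s * p s / (K t s * q s)) :=
        sum_le_sum fun t _ => log_sum_le _ _ (fun s => mul_nonneg (hK0 t s) (hp s))
          (fun s => mul_nonneg (hK0 t s) (hq s)) (hac' t)
    _ = ∑ t, ∑ s, K t s * (p s * Real.log (p s / q s)) := by
        refine sum_congr rfl fun t _ => sum_congr rfl fun s _ => ?_
        by_cases h : K t s = 0
        · simp [h]
        · rw [mul_div_mul_left _ _ h, mul_assoc]
    _ = ∑ s, p s * Real.log (p s / q s) := by
        rw [sum_comm]
        refine sum_congr rfl fun s _ => ?_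
        rw [← sum_mul, hK1, one_mul]

/-! ### The stochastic matrices of a post-processing -/

/-- The matrix by which the post-processing acts on the joint outcomes of the context `γ`;
the entry at `t`, `s` is the probability of the output `t` given the input `s`. -/
def ctxKernel {Φ : Type} [Fintype Φ] (μ : Φ → ℝ) (q : M → Φ → O → O → ℝ) (γ : Finset M)
    (t s : ↥γ → O) : ℝ :=
  ∑ φ, μ φ * ∏ x : ↥γ, q x.1 φ (t x) (s x)

/-- The same matrix for joint outcomes of all measurements, acting on global sections. -/
def globKernel {Φ : Type} [Fintype Φ] (μ : Φ → ℝ) (q : M → Φ → O → O → ℝ)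
    (g f : M → O) : ℝ :=
  ∑ φ, μ φ * ∏ x, q x φ (g x) (f x)

lemma ctxKernel_nonneg {Φ : Type} [Fintype Φ] (μ : Φ → ℝ) (hμ0 : ∀ φ, 0 ≤ μ φ)
    (q : M → Φ → O → O → ℝ) (hq0 : ∀ x φ t s, 0 ≤ q x φ t s) (γ : Finset M) (t s : ↥γ → O) :
    0 ≤ ctxKernel μ q γ t s :=
  sum_nonneg fun φ _ => mul_nonneg (hμ0 φ) (prod_nonneg fun _ _ => hq0 _ _ _ _)

lemma sum_ctxKernel {Φ : Type} [Fintype Φ] (μ : Φ → ℝ) (hμ1 : ∑ φ, μ φ = 1)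
    (q : M → Φ → O → O → ℝ) (hq1 : ∀ x φ s, ∑ t, q x φ t s = 1) (γ : Finset M) (s : ↥γ → O) :
    ∑ t, ctxKernel μ q γ t s = 1 := by
  unfold ctxKernel
  rw [sum_comm, ← hμ1]
  refine sum_congr rfl fun φ _ => ?_
  have h := Fintype.prod_sum fun (x : ↥γ) (o : O) => q x.1 φ o (s x)
  rw [← mul_sum, ← h]
  simp [hq1]

lemma postProc_eq {Φ : Type} [Fintype Φ] (μ : Φ → ℝ) (q : M → Φ → O → O → ℝ) (p : Fam M O)
    (γ : Finset M) : postProc μ q p γ = fun t => ∑ s, ctxKernel μ q γ t s * p γ s := by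
  funext t
  simp only [postProc, ctxKernel, sum_mul, mul_sum]
  rw [sum_comm]
  simp only [mul_assoc]

/-- Marginalizing a product of stochastic matrices over `M` onto `γ` leaves the factors in `γ`. -/
lemma sum_prod_restrict (k : M → O → ℝ) (hk : ∀ x, ∑ o, k x o = 1) (γ : Finset M)
    (t : ↥γ → O) :
    (∑ g : M → O, if (fun x : ↥γ => g x.1) = t then ∏ x, k x (g x) else 0)
      = ∏ x : ↥γ, k x.1 (t x) := by
  -- The constraint `g = t` on `γ` factorizes over the measurements, so that sum and product
  -- can be exchanged.
  let F : M → O → ℝ := fun x o =>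
    if h : x ∈ γ then (if o = t ⟨x, h⟩ then k x o else 0) else k x o
  have h1 : ∀ g : M → O, (if (fun x : ↥γ => g x.1) = t then ∏ x, k x (g x) else 0)
      = ∏ x, F x (g x) := by
    intro g
    split_ifs with h
    · refine prod_congr rfl fun x _ => ?_
      by_cases hx : x ∈ γ
      · have : g x = t ⟨x, hx⟩ := congrFun h ⟨x, hx⟩
        simp [F, hx, ← this]
      · simp [F, hx]
    · obtain ⟨x, hx⟩ := Function.ne_iff.1 h
      refine (prod_eq_zero (mem_univ x.1) ?_).symm
      simp only [F, x.2, dif_pos]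
      exact if_neg hx
  have h2 : ∀ x, ∑ o, F x o = if h : x ∈ γ then k x (t ⟨x, h⟩) else 1 := by
    intro x
    by_cases hx : x ∈ γ
    · simp [F, hx]
    · simp [F, hx, hk]
  rw [sum_congr rfl fun g _ => h1 g, ← Fintype.prod_sum, prod_congr rfl fun x _ => h2 x,
    ← prod_subset (subset_univ γ) fun x _ hx => dif_neg hx, ← prod_coe_sort]
  exact prod_congr rfl fun x _ => dif_pos x.2

/-- The global matrix restricts to the matrix of each context. -/
lemma sum_globKernel {Φ : Type} [Fintype Φ] (μ : Φ → ℝ)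
    (q : M → Φ → O → O → ℝ) (hq1 : ∀ x φ s, ∑ t, q x φ t s = 1) (γ : Finset M)
    (t : ↥γ → O) (f : M → O) :
    (∑ g : M → O, if (fun x : ↥γ => g x.1) = t then globKernel μ q g f else 0)
      = ctxKernel μ q γ t fun x => f x.1 := by
  unfold globKernel ctxKernel
  rw [sum_congr rfl fun φ _ => congrArg (μ φ * ·)
    (sum_prod_restrict (fun x o => q x φ o (f x)) (fun x => hq1 x φ (f x)) γ t).symm]
  simp only [mul_sum]
  rw [sum_comm]
  refine sum_congr rfl fun g _ => ?_
  split_ifs <;> simp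

/-! ### Post-processing of behaviors -/

lemma isBehavior_postProc {Φ : Type} [Fintype Φ] (μ : Φ → ℝ) (hμ0 : ∀ φ, 0 ≤ μ φ)
    (hμ1 : ∑ φ, μ φ = 1) (q : M → Φ → O → O → ℝ) (hq0 : ∀ x φ t s, 0 ≤ q x φ t s)
    (hq1 : ∀ x φ s, ∑ t, q x φ t s = 1) (C : Finset (Finset M)) (r : Fam M O)
    (hr : IsBehavior C r) : IsBehavior C (postProc μ q r) := by
  intro γ hγ
  rw [postProc_eq]
  refine ⟨fun t => sum_nonneg fun s _ =>
    mul_nonneg (ctxKernel_nonneg μ hμ0 q hq0 γ t s) ((hr γ hγ).1 s), ?_⟩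
  rw [sum_comm, ← (hr γ hγ).2]
  refine sum_congr rfl fun s _ => ?_
  rw [← sum_mul, sum_ctxKernel μ hμ1 q hq1, one_mul]

lemma nonContextual_postProc {Φ : Type} [Fintype Φ] (μ : Φ → ℝ) (hμ0 : ∀ φ, 0 ≤ μ φ)
    (hμ1 : ∑ φ, μ φ = 1) (q : M → Φ → O → O → ℝ) (hq0 : ∀ x φ t s, 0 ≤ q x φ t s)
    (hq1 : ∀ x φ s, ∑ t, q x φ t s = 1) (C : Finset (Finset M)) (r : Fam M O)
    (hr : NonContextual C r) : NonContextual C (postProc μ q r) := by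
  obtain ⟨d, hd0, hd1, hd⟩ := hr
  refine ⟨fun g => ∑ f, globKernel μ q g f * d f, fun g => sum_nonneg fun f _ =>
    mul_nonneg (sum_nonneg fun φ _ => mul_nonneg (hμ0 φ) (prod_nonneg fun _ _ => hq0 _ _ _ _))
      (hd0 f), ?_, fun γ hγ t => ?_⟩
  · rw [sum_comm, ← hd1]
    refine sum_congr rfl fun f _ => ?_
    rw [← sum_mul]
    have h : ∑ g, globKernel μ q g f = 1 := by
      unfold globKernel
      rw [sum_comm, ← hμ1]
      refine sum_congr rfl fun φ _ => ?_
      rw [← mul_sum, ← Fintype.prod_sum fun (x : M) (o : O) => q x φ o (f x)]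
      simp [hq1]
    rw [h, one_mul]
  · have hL : postProc μ q r γ t = ∑ f, ctxKernel μ q γ t (fun x => f x.1) * d f := by
      rw [postProc_eq]
      simp only [hd γ hγ, marg, mul_sum]
      rw [sum_comm]
      refine sum_congr rfl fun f _ => ?_
      simp
    rw [hL, marg]
    simp only [← sum_globKernel μ q hq1, sum_mul]
    rw [sum_comm]
    refine sum_congr rfl fun g _ => ?_
    split_ifs <;> simp

/-! ### Monotonicity -/

/-- The uniform relative entropy of contextuality is monotone under non-contextual
measurement-wise post-processing. -/
theorem eu_monotone_postProc
    {Φ : Type} [Fintype Φ] (μ : Φ → ℝ) (hμ0 : ∀ φ, 0 ≤ μ φ) (hμ1 : ∑ φ, μ φ = 1)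
    (q : M → Φ → O → O → ℝ) (hq0 : ∀ x φ t s, 0 ≤ q x φ t s)
    (hq1 : ∀ x φ s, ∑ t, q x φ t s = 1)
    (C : Finset (Finset M)) (p : Fam M O) (hp : IsBehavior C p) :
    Eu C (postProc μ q p) ≤ Eu C p := by
  unfold Eu
  refine mul_le_mul_of_nonneg_left ?_ (EReal.coe_nonneg.2 (by positivity))
  refine le_iInf₂ fun r hr => ?_
  obtain ⟨hrB, hrN⟩ := hr
  refine (iInf₂_le (postProc μ q r) ⟨isBehavior_postProc μ hμ0 hμ1 q hq0 hq1 C r hrB,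
    nonContextual_postProc μ hμ0 hμ1 q hq0 hq1 C r hrN⟩).trans ?_
  refine sum_le_sum fun γ hγ => ?_
  rw [postProc_eq, postProc_eq]
  exact DKL_kernel_le _ (ctxKernel_nonneg μ hμ0 q hq0 γ) (sum_ctxKernel μ hμ1 q hq1 γ) _ _
    (hp γ hγ).1 (hrB γ hγ).1
end
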